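/- arXiv:2404.13703 — 2 statements merged into one kernel-verified Lean document; each statement's English description precedes it below -/
import Mathlib

section
/- Suppose the initial datum Q_init satisfies Assumption (A2) and additionally Q_init ∈ C²([0,1]) with Q_init''(1) − Q_init''(0) = K'(Φ_F)·Q_init'(1) − K'(0)·Q_init'(0). Let (Q,N) be the unique classical solution of the Q-system on its maximal existence interval [0,τ*). Then N ∈ C¹([0,τ*)) and Q ∈ C²([0,τ*)×[0,1]). -/
open Real Set MeasureTheory Filter Topology
open scoped ENNReal

noncomputable section

/-- The time interval `[0, T)` in `ℝ`, where `T : ℝ≥0∞` may be `∞`. -/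
def Ico0 (T : ℝ≥0∞) : Set ℝ := {τ : ℝ | 0 ≤ τ ∧ ENNReal.ofReal τ < T}

/-- Partial derivative in the time variable (one-sided at `τ = 0`). -/
def pdTau (Q : ℝ → ℝ → ℝ) (τ η : ℝ) : ℝ := derivWithin (fun s => Q s η) (Ici 0) τ

/-- Partial derivative in the spatial variable (one-sided at `η = 0` and `η = 1`). -/
def pdEta (Q : ℝ → ℝ → ℝ) (τ η : ℝ) : ℝ := derivWithin (fun x => Q τ x) (Icc 0 1) η

/-- Assumption 1.1: `K ∈ C²(ℝ)` with `K'`, `K''` bounded on `ℝ` and `K > 0` on `[0, Φ_F]`. -/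
structure KAssump (K : ℝ → ℝ) (ΦF : ℝ) : Prop where
  smooth : ContDiff ℝ 2 K
  bdd1 : ∃ C : ℝ, ∀ x : ℝ, |deriv K x| ≤ C
  bdd2 : ∃ C : ℝ, ∀ x : ℝ, |deriv (deriv K) x| ≤ C
  pos : ∀ φ ∈ Icc (0 : ℝ) ΦF, 0 < K φ

/-- `k_min := K'(0) + ∫₀^{Φ_F} min(K''(φ), 0) dφ`. -/
def kmin (K : ℝ → ℝ) (ΦF : ℝ) : ℝ :=
  deriv K 0 + ∫ φ in (0 : ℝ)..ΦF, min (deriv (deriv K) φ) 0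

/-- `k_max := K'(0) + ∫₀^{Φ_F} max(K''(φ), 0) dφ`. -/
def kmax (K : ℝ → ℝ) (ΦF : ℝ) : ℝ :=
  deriv K 0 + ∫ φ in (0 : ℝ)..ΦF, max (deriv (deriv K) φ) 0

/-- Assumption (A2) on the initial datum. -/
structure A2 (K : ℝ → ℝ) (ΦF : ℝ) (Qinit : ℝ → ℝ) : Prop where
  reg : ContDiffOn ℝ 1 Qinit (Icc 0 1)
  mono : MonotoneOn Qinit (Icc 0 1)
  init0 : Qinit 0 = 0
  init1 : Qinit 1 = ΦF
  deriv1 : K ΦF < derivWithin Qinit (Icc 0 1) 1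
  compat : derivWithin Qinit (Icc 0 1) 1 - derivWithin Qinit (Icc 0 1) 0 = K ΦF - K 0

/-- A classical solution `(Q, N)` of the Q-system on `[0, T)` with initial datum `Qinit`. -/
structure IsQSol (K : ℝ → ℝ) (ΦF : ℝ) (T : ℝ≥0∞) (Qinit : ℝ → ℝ)
    (Q : ℝ → ℝ → ℝ) (N : ℝ → ℝ) : Prop where
  initReg : ContDiffOn ℝ 1 Qinit (Icc 0 1)
  initMono : MonotoneOn Qinit (Icc 0 1)
  init0 : Qinit 0 = 0
  init1 : Qinit 1 = ΦF
  initDeriv : K ΦF < derivWithin Qinit (Icc 0 1) 1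
  reg : ContDiffOn ℝ 1 (Function.uncurry Q) (Ico0 T ×ˢ Icc (0 : ℝ) 1)
  mono : ∀ τ ∈ Ico0 T, MonotoneOn (Q τ) (Icc 0 1)
  Ncont : ContinuousOn N (Ico0 T)
  Npos : ∀ τ ∈ Ico0 T, 0 < N τ
  pde : ∀ τ ∈ Ico0 T, ∀ η ∈ Ioo (0 : ℝ) 1,
    pdTau Q τ η + pdEta Q τ η = 1 / N τ + K (Q τ η)
  bc : ∀ τ ∈ Ico0 T, Q τ 0 = 0
  Ndef : ∀ τ ∈ Ico0 T, 1 / N τ = pdEta Q τ 1 - K ΦF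
  init : ∀ η ∈ Icc (0 : ℝ) 1, Q 0 η = Qinit η
  constraint : ∀ τ ∈ Ico0 T, K ΦF < pdEta Q τ 1

/-- A classical solution `(Q, Ñ)` of the relaxed system on `[0, T)` with initial datum `Qinit`,
where `Ñ` is unconstrained in sign. -/
structure IsRelaxedSol (K : ℝ → ℝ) (ΦF : ℝ) (T : ℝ≥0∞) (Qinit : ℝ → ℝ)
    (Q : ℝ → ℝ → ℝ) (Ntil : ℝ → ℝ) : Prop where
  initReg : ContDiffOn ℝ 1 Qinit (Icc 0 1)
  init0 : Qinit 0 = 0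
  init1 : Qinit 1 = ΦF
  reg : ContDiffOn ℝ 1 (Function.uncurry Q) (Ico0 T ×ˢ Icc (0 : ℝ) 1)
  Ncont : ContinuousOn Ntil (Ico0 T)
  pde : ∀ τ ∈ Ico0 T, ∀ η ∈ Ioo (0 : ℝ) 1,
    pdTau Q τ η + pdEta Q τ η = Ntil τ + K (Q τ η)
  bc : ∀ τ ∈ Ico0 T, Q τ 0 = 0
  Ndef : ∀ τ ∈ Ico0 T, Ntil τ = pdEta Q τ 1 - K ΦF
  init : ∀ η ∈ Icc (0 : ℝ) 1, Q 0 η = Qinit η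

/-- A steady state `(Q*, N*)` of the Q-system. -/
def IsSteadyState (K : ℝ → ℝ) (ΦF : ℝ) (Qs : ℝ → ℝ) (Ns : ℝ) : Prop :=
  ContDiffOn ℝ 1 Qs (Icc 0 1) ∧ 0 < Ns ∧
    (∀ η ∈ Icc (0 : ℝ) 1, derivWithin Qs (Icc 0 1) η = K (Qs η) + 1 / Ns) ∧
    Qs 0 = 0 ∧ Qs 1 = ΦF

/-- `P₀ f := f - ∫₀¹ f`. -/
def P0 (f : ℝ → ℝ) (η : ℝ) : ℝ := f η - ∫ x in (0 : ℝ)..1, f x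

/-- `H_init := Q_init' - K ∘ Q_init` (derivative within `[0,1]`). -/
def Hinit (K : ℝ → ℝ) (Qinit : ℝ → ℝ) (η : ℝ) : ℝ :=
  derivWithin Qinit (Icc 0 1) η - K (Qinit η)

lemma contDiff_of_partials (f f1 f2 : ℝ → ℝ → ℝ)
    (h1 : ∀ a b, HasDerivAt (fun x => f x b) (f1 a b) a)
    (h2 : ∀ a b, HasDerivAt (fun y => f a y) (f2 a b) b)
    (c1 : Continuous (Function.uncurry f1)) (c2 : Continuous (Function.uncurry f2)) :
    ContDiff ℝ 1 (Function.uncurry f) := by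
  rw [contDiff_one_iff_hasFDerivAt]
  let g1 : ℝ → ℝ → ℝ →L[ℝ] ℝ := fun a b => ContinuousLinearMap.toSpanSingleton ℝ (f1 a b)
  let g2 : ℝ → ℝ → ℝ →L[ℝ] ℝ := fun a b => ContinuousLinearMap.toSpanSingleton ℝ (f2 a b)
  have cg1 : Continuous (Function.uncurry g1) := by
    have : Continuous (fun u : ℝ × ℝ => (ContinuousLinearMap.toSpanSingletonCLE : ℝ ≃L[ℝ] (ℝ →L[ℝ] ℝ)) (f1 u.1 u.2)) :=
      (ContinuousLinearEquiv.continuous _).comp c1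
    exact this
  have cg2 : Continuous (Function.uncurry g2) := by
    have : Continuous (fun u : ℝ × ℝ => (ContinuousLinearMap.toSpanSingletonCLE : ℝ ≃L[ℝ] (ℝ →L[ℝ] ℝ)) (f2 u.1 u.2)) :=
      (ContinuousLinearEquiv.continuous _).comp c2
    exact this
  refine ⟨fun u => (g1 u.1 u.2).coprod (g2 u.1 u.2), ?_, fun u => ?_⟩
  · have : (fun u : ℝ × ℝ => (g1 u.1 u.2).coprod (g2 u.1 u.2)) = fun u : ℝ × ℝ =>
      (g1 u.1 u.2).comp (ContinuousLinearMap.fst ℝ ℝ ℝ) + (g2 u.1 u.2).comp (ContinuousLinearMap.snd ℝ ℝ ℝ) := by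
      ext u <;> simp
    rw [this]
    exact (cg1.clm_comp continuous_const).add (cg2.clm_comp continuous_const)
  · have := hasStrictFDerivAt_uncurry_coprod (𝕜 := ℝ) (u := u) (f := f) (f₁ := g1) (f₂ := g2)
      (Eventually.of_forall fun v => (h1 v.1 v.2).hasFDerivAt)
      (Eventually.of_forall fun v => (h2 v.1 v.2).hasFDerivAt) cg1.continuousAt cg2.continuousAt
    exact this.hasFDerivAt

/-- Characteristic integrals. -/
lemma charInt (k φ : ℝ → ℝ → ℝ) (C : ℝ)
    (hk : Continuous (Function.uncurry k)) (hφ : Continuous (Function.uncurry φ))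
    (hC : ∀ s x, |φ s x| ≤ C)
    (hLip : ∀ s x y, |k s x - k s y| ≤ C * |x - y|)
    (hd : ∀ s x, x ≠ 0 → x ≠ 1 → HasDerivAt (k s) (if x ∈ Ioo (0:ℝ) 1 then φ s x else 0) x) :
    ∃ B : ℝ → ℝ → ℝ, ContDiff ℝ 1 (Function.uncurry B) ∧ (∀ c, B c 0 = 0) ∧
      ∀ c s, HasDerivAt (B c) (k s (c + s)) s := by
  have hC0 : 0 ≤ C := (abs_nonneg _).trans (hC 0 0)
  let ψ : ℝ → ℝ → ℝ := fun s x => if x ∈ Ioo (0:ℝ) 1 then φ s x else 0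
  have hψC : ∀ s x, |ψ s x| ≤ C := by
    intro s x
    simp only [ψ]
    split_ifs
    · exact hC s x
    · simpa using hC0
  have hkc : ∀ c, Continuous (fun u => k u (c + u)) := fun c =>
    hk.comp (by fun_prop : Continuous fun u : ℝ => (u, c + u))
  have hψm : ∀ c, Measurable (fun u => ψ u (c + u)) := by
    intro c
    refine Measurable.ite ?_ ?_ measurable_const
    · exact (by fun_prop : Measurable fun u : ℝ => c + u) measurableSet_Ioo
    · exact (hφ.comp (by fun_prop : Continuous fun u : ℝ => (u, c + u))).measurable
  have hae : ∀ c : ℝ, ∀ᵐ u : ℝ, c + u ≠ 0 ∧ c + u ≠ 1 := by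
    intro c
    have h1 : ∀ᵐ u : ℝ, u ≠ -c := by simp [ae_iff]
    have h2 : ∀ᵐ u : ℝ, u ≠ 1 - c := by simp [ae_iff]
    filter_upwards [h1, h2] with u h1 h2
    exact ⟨fun h => h1 (by linarith), fun h => h2 (by linarith)⟩
  have hii : ∀ c a b, IntervalIntegrable (fun u => ψ u (c + u)) volume a b := by
    intro c a b
    refine (intervalIntegrable_const (c := C)).mono_fun (hψm c).aestronglyMeasurable ?_
    refine Eventually.of_forall fun u => ?_
    simp only [Real.norm_eq_abs, abs_of_nonneg hC0]
    exact hψC _ _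
  refine ⟨fun c s => ∫ u in (0:ℝ)..s, k u (c + u), ?_, fun c => by simp, fun c s => ?_⟩
  · refine contDiff_of_partials _ (fun c s => ∫ u in (0:ℝ)..s, ψ u (c + u)) (fun c s => k s (c + s)) ?_ ?_ ?_ ?_
    · intro c s
      refine (intervalIntegral.hasDerivAt_integral_of_dominated_loc_of_lip (F := fun c u => k u (c+u))
        (bound := fun _ => C) (s := univ) univ_mem ?_ ?_ ?_ ?_ ?_ ?_).2
      · exact Eventually.of_forall fun c => (hkc c).aestronglyMeasurable
      · exact (hkc c).intervalIntegrable _ _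
      · exact (hψm c).aestronglyMeasurable
      · refine Eventually.of_forall fun u _ => ?_
        refine LipschitzOnWith.of_dist_le_mul fun x _ y _ => ?_
        simp only [Real.dist_eq, Real.coe_nnabs, abs_of_nonneg hC0]
        simpa using hLip u (x + u) (y + u)
      · exact intervalIntegrable_const
      · filter_upwards [hae c] with u hu _
        have := (hd u (c+u) hu.1 hu.2)
        exact HasDerivAt.comp_add_const c u this
    · intro c s
      exact intervalIntegral.integral_hasDerivAt_right ((hkc c).intervalIntegrable _ _)
        ((hkc c).stronglyMeasurableAtFilter _ _) (hkc c).continuousAt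
    · rw [continuous_iff_continuousAt]
      rintro ⟨c0, s0⟩
      have e : (Function.uncurry fun c s => ∫ u in (0:ℝ)..s, ψ u (c + u)) = fun v : ℝ × ℝ =>
          (∫ u in (0:ℝ)..s0, ψ u (v.1 + u)) + ∫ u in s0..v.2, ψ u (v.1 + u) := by
        ext ⟨c, s⟩
        simp only [Function.uncurry]
        rw [intervalIntegral.integral_add_adjacent_intervals (hii _ _ _) (hii _ _ _)]
      rw [e]
      refine ContinuousAt.add ?_ ?_
      · have : ContinuousAt (fun c => ∫ u in (0:ℝ)..s0, ψ u (c + u)) c0 := by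
          refine intervalIntegral.continuousAt_of_dominated_interval (bound := fun _ => C) ?_ ?_ ?_ ?_
          · exact Eventually.of_forall fun c => (hψm c).aestronglyMeasurable
          · exact Eventually.of_forall fun c => Eventually.of_forall fun u _ => hψC _ _
          · exact intervalIntegrable_const
          · filter_upwards [hae c0] with u hu _
            have hcφ : ContinuousAt (fun x => φ u (x + u)) c0 :=
              (hφ.comp (by fun_prop : Continuous fun x : ℝ => (u, x + u))).continuousAt
            have hct : ContinuousAt (fun x : ℝ => x + u) c0 := by fun_prop
            by_cases h : c0 + u ∈ Ioo (0:ℝ) 1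
            · refine hcφ.congr ?_
              filter_upwards [hct.preimage_mem_nhds (isOpen_Ioo.mem_nhds h)] with x hx
              have : x + u ∈ Ioo (0:ℝ) 1 := hx
              simp only [ψ, if_pos this]
            · have h' : c0 + u ∈ (Icc (0:ℝ) 1)ᶜ := by
                intro h2
                exact h ⟨lt_of_le_of_ne h2.1 (Ne.symm hu.1), lt_of_le_of_ne h2.2 hu.2⟩
              refine (continuousAt_const (y := (0:ℝ))).congr ?_
              filter_upwards [hct.preimage_mem_nhds (isClosed_Icc.isOpen_compl.mem_nhds h')] with x hx
              have : x + u ∉ Ioo (0:ℝ) 1 := fun h => hx (Ioo_subset_Icc_self h)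
              simp only [ψ, if_neg this]
        exact ContinuousAt.comp (f := Prod.fst) (x := (c0, s0)) this continuousAt_fst
      · unfold ContinuousAt
        simp only [intervalIntegral.integral_same]
        refine squeeze_zero_norm (a := fun v : ℝ × ℝ => C * |v.2 - s0|) (fun v => ?_) ?_
        · exact intervalIntegral.norm_integral_le_of_norm_le_const fun u _ => hψC _ _
        · have : Continuous (fun v : ℝ × ℝ => C * |v.2 - s0|) := by fun_prop
          simpa using this.tendsto (c0, s0)
    · exact hk.comp (by fun_prop : Continuous fun v : ℝ × ℝ => (v.2, v.1 + v.2))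
  · exact intervalIntegral.integral_hasDerivAt_right ((hkc c).intervalIntegrable _ _)
        ((hkc c).stronglyMeasurableAtFilter _ _) (hkc c).continuousAt

/-- The equation for the spatial derivative along characteristics. -/
lemma charP (K : ℝ → ℝ) (hK : ContDiff ℝ 2 K) (C : ℝ) (hKC : ∀ x, |deriv K x| ≤ C)
    (T M : ℝ) (q p : ℝ → ℝ → ℝ) (n : ℝ → ℝ)
    (hq : Continuous (Function.uncurry q)) (hp : Continuous (Function.uncurry p))
    (hn : Continuous n) (hM : ∀ s x, |p s x| ≤ M)
    (hx : ∀ s, ∀ x ∈ Ioo (0:ℝ) 1, HasDerivAt (q s) (p s x) x)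
    (hc : ∀ c, ∀ s ∈ Ioo (0:ℝ) T, c + s ∈ Ioo (0:ℝ) 1 →
      HasDerivAt (fun s => q s (c + s)) (n s + K (q s (c + s))) s)
    (c s : ℝ) (hs : s ∈ Ioo (0:ℝ) T) (hcs : c + s ∈ Ioo (0:ℝ) 1) :
    HasDerivAt (fun s => p s (c + s)) (deriv K (q s (c + s)) * p s (c + s)) s := by
  obtain ⟨hs1, hs2⟩ := hs
  obtain ⟨h1, h2⟩ := hcs
  obtain ⟨ε, hε, e1, e2, e3, e4⟩ : ∃ ε : ℝ, 0 < ε ∧ ε < s ∧ s + ε < T ∧ 2 * ε < c + s ∧ c + s + 2 * ε < 1 := by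
    refine ⟨(min (min s (T - s)) (min (c + s) (1 - (c + s)))) / 3, ?_, ?_, ?_, ?_, ?_⟩
    · have : 0 < min (min s (T - s)) (min (c + s) (1 - (c + s))) := by
        refine lt_min (lt_min ?_ ?_) (lt_min ?_ ?_) <;> linarith
      linarith
    all_goals
      have a1 := min_le_left (min s (T - s)) (min (c + s) (1 - (c + s)))
      have a2 := min_le_right (min s (T - s)) (min (c + s) (1 - (c + s)))
      have a3 := min_le_left s (T - s)
      have a4 := min_le_right s (T - s)
      have a5 := min_le_left (c + s) (1 - (c + s))
      have a6 := min_le_right (c + s) (1 - (c + s))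
      linarith
  have hdK : Continuous (deriv K) := hK.continuous_deriv (by norm_num)
  have hKd : Differentiable ℝ K := hK.differentiable (by norm_num)
  have hqc : ∀ c, Continuous (fun u => q u (c + u)) := fun c =>
    hq.comp (by fun_prop : Continuous fun u : ℝ => (u, c + u))
  have hpc : ∀ c, Continuous (fun u => p u (c + u)) := fun c =>
    hp.comp (by fun_prop : Continuous fun u : ℝ => (u, c + u))
  have hKq : ∀ c, Continuous (fun u => K (q u (c + u))) := fun c => hK.continuous.comp (hqc c)
  have hF' : Continuous (fun u => deriv K (q u (c + u)) * p u (c + u)) := (hdK.comp (hqc c)).mul (hpc c)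
  have key : ∀ t ∈ Ioo (s - ε) (s + ε),
      p t (c + t) = p (s - ε) (c + (s - ε)) + ∫ u in (s - ε)..t, deriv K (q u (c + u)) * p u (c + u) := by
    intro t ht
    have hsub : ∀ u ∈ uIcc (s - ε) t, u ∈ Icc (s - ε) (s + ε) := by
      intro u hu
      rw [uIcc_of_le ht.1.le] at hu
      exact ⟨hu.1, hu.2.trans ht.2.le⟩
    have id1 : ∀ c' ∈ Ioo (c - ε) (c + ε), ∫ u in (s - ε)..t, K (q u (c' + u)) =
        q t (c' + t) - q (s - ε) (c' + (s - ε)) - ∫ u in (s - ε)..t, n u := by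
      intro c' hc'
      have := intervalIntegral.integral_eq_sub_of_hasDerivAt (a := s - ε) (b := t)
        (f := fun s => q s (c' + s)) (f' := fun s => n s + K (q s (c' + s))) ?_ ?_
      · rw [intervalIntegral.integral_add (hn.intervalIntegrable _ _) ((hKq c').intervalIntegrable _ _)] at this
        linarith
      · intro u hu
        have := hsub u hu
        refine hc c' u ⟨?_, ?_⟩ ⟨?_, ?_⟩ <;> linarith [this.1, this.2, hc'.1, hc'.2]
      · exact (hn.add (hKq c')).intervalIntegrable _ _
    have hmem : Ioo (c - ε) (c + ε) ∈ 𝓝 c := Ioo_mem_nhds (by linarith) (by linarith)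
    have d1 := (intervalIntegral.hasDerivAt_integral_of_dominated_loc_of_deriv_le (a := s - ε) (b := t)
      (μ := volume) (F := fun c u => K (q u (c + u)))
      (F' := fun c u => deriv K (q u (c + u)) * p u (c + u)) (bound := fun _ => C * M) hmem
      (Eventually.of_forall fun c => (hKq c).aestronglyMeasurable)
      ((hKq c).intervalIntegrable _ _) hF'.aestronglyMeasurable
      (Eventually.of_forall fun u _ x _ => by
        rw [norm_mul]
        exact mul_le_mul (hKC _) (hM _ _) (norm_nonneg _) ((abs_nonneg _).trans (hKC 0)))
      intervalIntegrable_const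
      (Eventually.of_forall fun u hu x hx' => by
        have hu' := hsub u (uIoc_subset_uIcc hu)
        have a := hx u (x + u) ⟨by linarith [hu'.1, hx'.1], by linarith [hu'.2, hx'.2]⟩
        have b := HasDerivAt.comp_add_const x u a
        exact (hKd _).hasDerivAt.comp x b)).2
    have d2 : HasDerivAt (fun c' => q t (c' + t) - q (s - ε) (c' + (s - ε)) - ∫ u in (s - ε)..t, n u)
        (p t (c + t) - p (s - ε) (c + (s - ε))) c := by
      have a := HasDerivAt.comp_add_const c t (hx t (c + t) ⟨by linarith [ht.1, ht.2], by linarith [ht.1, ht.2]⟩)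
      have b := HasDerivAt.comp_add_const c (s - ε)
        (hx (s - ε) (c + (s - ε)) ⟨by linarith [ht.1, ht.2], by linarith [ht.1, ht.2]⟩)
      exact (a.sub b).sub_const _
    have d3 := d2.congr_of_eventuallyEq (f₁ := fun c' => ∫ u in (s - ε)..t, K (q u (c' + u)))
      (by filter_upwards [hmem] with x hx using id1 x hx)
    have := d1.unique d3
    linarith
  have d := (intervalIntegral.integral_hasDerivAt_right (a := s - ε) (b := s) (hF'.intervalIntegrable _ _)
        (hF'.stronglyMeasurableAtFilter _ _) hF'.continuousAt).const_add (p (s - ε) (c + (s - ε)))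
  refine d.congr_of_eventuallyEq ?_
  filter_upwards [Ioo_mem_nhds (show s - ε < s by linarith) (show s < s + ε by linarith)] with t ht using key t ht

/-- Gluing of `C¹` functions. -/
lemma glue (f : ℝ → ℝ) (a b c d : ℝ) (hab : a < b) (hbc : b < c)
    (h1 : ContDiffOn ℝ 1 f (Icc a b)) (h2 : ContDiffOn ℝ 1 f (Icc b c))
    (d1 : HasDerivWithinAt f d (Icc a b) b) (d2 : HasDerivWithinAt f d (Icc b c) b) :
    ContDiffOn ℝ 1 f (Icc a c) := by
  have u1 := uniqueDiffOn_Icc hab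
  have u2 := uniqueDiffOn_Icc hbc
  have u3 := uniqueDiffOn_Icc (hab.trans hbc)
  have e : Icc a b ∪ Icc b c = Icc a c := Icc_union_Icc_eq_Icc hab.le hbc.le
  rw [contDiffOn_one_iff_derivWithin u1] at h1
  rw [contDiffOn_one_iff_derivWithin u2] at h2
  have H1 : ∀ x ∈ Icc a b, HasDerivWithinAt f (derivWithin f (Icc a b) x) (Icc a c) x := by
    intro x hx
    have hh := (h1.1 x hx).hasDerivWithinAt
    rcases hx.2.lt_or_eq with h | h
    · refine hh.mono_of_mem_nhdsWithin ?_
      rw [mem_nhdsWithin]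
      exact ⟨Iio b, isOpen_Iio, h, fun y hy => ⟨hy.2.1, hy.1.le⟩⟩
    · subst h
      rw [d1.derivWithin (u1 x hx), ← e]
      exact d1.union d2
  have H2 : ∀ x ∈ Icc b c, HasDerivWithinAt f (derivWithin f (Icc b c) x) (Icc a c) x := by
    intro x hx
    have hh := (h2.1 x hx).hasDerivWithinAt
    rcases hx.1.lt_or_eq with h | h
    · refine hh.mono_of_mem_nhdsWithin ?_
      rw [mem_nhdsWithin]
      exact ⟨Ioi b, isOpen_Ioi, h, fun y hy => ⟨le_of_lt hy.1, hy.2.2⟩⟩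
    · subst h
      rw [d2.derivWithin (u2 b hx), ← e]
      exact d1.union d2
  rw [contDiffOn_one_iff_derivWithin u3]
  refine ⟨fun x hx => ?_, ?_⟩
  · rcases le_total x b with h | h
    · exact (H1 x ⟨hx.1, h⟩).differentiableWithinAt
    · exact (H2 x ⟨h, hx.2⟩).differentiableWithinAt
  · rw [← e]
    refine ContinuousOn.union_of_isClosed ?_ ?_ isClosed_Icc isClosed_Icc
    · refine h1.2.congr fun x hx => ?_
      rw [e]
      exact (H1 x hx).derivWithin (u3 x (e ▸ Or.inl hx))
    · refine h2.2.congr fun x hx => ?_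
      rw [e]
      exact (H2 x hx).derivWithin (u3 x (e ▸ Or.inr hx))

/-- Core regularity statement on a compact time interval. -/
lemma coreReg (K : ℝ → ℝ) (hK : ContDiff ℝ 2 K) (C C2 : ℝ) (hKC : ∀ x, |deriv K x| ≤ C)
    (hKC2 : ∀ x, |deriv (deriv K) x| ≤ C2)
    (T M D : ℝ) (hT : 0 < T) (q p : ℝ → ℝ → ℝ) (n : ℝ → ℝ)
    (hq : Continuous (Function.uncurry q)) (hp : Continuous (Function.uncurry p))
    (hn : Continuous n) (hM : ∀ s x, |p s x| ≤ M)
    (hx : ∀ s, ∀ x ∈ Ioo (0:ℝ) 1, HasDerivAt (q s) (p s x) x)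
    (hL : ∀ s x y, |q s x - q s y| ≤ M * |x - y|)
    (hq0 : ∀ s, ∀ x ≤ 0, q s x = q s 0) (hq1 : ∀ s, ∀ x ≥ 1, q s x = q s 1)
    (hc : ∀ c, ∀ s ∈ Ioo (0:ℝ) T, c + s ∈ Ioo (0:ℝ) 1 →
      HasDerivAt (fun s => q s (c + s)) (n s + K (q s (c + s))) s)
    (hb : ∀ s ∈ Icc 0 T, p s 0 = p s 1 + D)
    (hp0 : ContDiffOn ℝ 1 (p 0) (Icc 0 1)) (a0 a1 : ℝ)
    (ha0 : HasDerivWithinAt (p 0) a0 (Icc 0 1) 0) (ha1 : HasDerivWithinAt (p 0) a1 (Icc 0 1) 1)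
    (hcomp : a1 - a0 = deriv K (q 0 1) * p 0 1 - deriv K (q 0 0) * p 0 0) :
    ContDiffOn ℝ 1 (Function.uncurry p) (Icc 0 T ×ˢ Icc 0 1) := by
  have hK1 : ContDiff ℝ 1 (deriv K) := by
    have : ContDiff ℝ (1 + 1) K := by simpa [one_add_one_eq_two] using hK
    exact ((contDiff_succ_iff_deriv (n := 1)).1 this).2.2
  have hdK : Continuous (deriv K) := hK1.continuous
  have hddK : Continuous (deriv (deriv K)) := hK1.continuous_deriv le_rfl
  have hdKd : Differentiable ℝ (deriv K) := hK1.differentiable (by norm_num)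
  have hC20 : 0 ≤ C2 := (abs_nonneg _).trans (hKC2 0)
  obtain ⟨B, hB, hB0, hBs⟩ := charInt (fun s x => deriv K (q s x))
    (fun s x => deriv (deriv K) (q s x) * p s x) (C2 * M) (hdK.comp hq) ((hddK.comp hq).mul hp)
    (fun s x => by
      rw [abs_mul]
      exact mul_le_mul (hKC2 _) (hM _ _) (abs_nonneg _) hC20)
    (fun s x y => by
      have := Convex.norm_image_sub_le_of_norm_deriv_le (f := deriv K) (C := C2) (s := univ)
        (x := q s y) (y := q s x) (fun x _ => hdKd x) (fun x _ => hKC2 x) convex_univ trivial trivial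
      simp only [Real.norm_eq_abs] at this
      calc _ ≤ _ := this
        _ ≤ C2 * (M * |x - y|) := mul_le_mul_of_nonneg_left (hL _ _ _) hC20
        _ = _ := by ring)
    (fun s x h0 h1 => by
      split_ifs with h
      · exact (hdKd _).hasDerivAt.comp x (hx s x h)
      · rcases lt_or_gt_of_ne h0 with h0 | h0
        · refine (hasDerivAt_const x (deriv K (q s 0))).congr_of_eventuallyEq ?_
          filter_upwards [Iio_mem_nhds h0] with y hy
          rw [hq0 s y (le_of_lt hy)]
        · have h1 : 1 < x := lt_of_le_of_ne (not_lt.1 fun h' => h ⟨h0, h'⟩) (Ne.symm h1)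
          refine (hasDerivAt_const x (deriv K (q s 1))).congr_of_eventuallyEq ?_
          filter_upwards [Ioi_mem_nhds h1] with y hy
          rw [hq1 s y (le_of_lt hy)])
  have hpc : ∀ c, Continuous (fun u => p u (c + u)) := fun c =>
    hp.comp (by fun_prop : Continuous fun u : ℝ => (u, c + u))
  have hconst : ∀ c s1 s2, 0 ≤ s1 → s1 ≤ s2 → s2 ≤ T → 0 ≤ c + s1 → c + s2 ≤ 1 →
      p s2 (c + s2) * exp (-B c s2) = p s1 (c + s1) * exp (-B c s1) := by
    intro c s1 s2 h1 h2 h3 h4 h5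
    rcases h2.lt_or_eq with h2 | h2
    · obtain ⟨s, hs, he⟩ := exists_hasDerivAt_eq_slope (fun s => p s (c + s) * exp (-B c s)) (fun _ => 0) h2
        (by
          have : Continuous (B c) := continuous_iff_continuousAt.2 fun s => (hBs c s).continuousAt
          exact ((hpc c).mul this.neg.rexp).continuousOn)
        (fun s hs => by
          have a := charP K hK C hKC T M q p n hq hp hn hM hx hc c s
            ⟨by linarith [hs.1], by linarith [hs.2]⟩ ⟨by linarith [hs.1], by linarith [hs.2]⟩
          refine (a.mul (hBs c s).neg.exp).congr_deriv ?_
          simp only [Pi.neg_apply]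
          ring)
      have : s2 - s1 ≠ 0 := by linarith
      field_simp at he
      linarith
    · rw [h2]
  let G : ℝ → ℝ := fun σ => if σ ≤ 0 then p 0 (-σ) else p σ 0 * exp (-B (-σ) σ)
  have hGn : ∀ σ ≤ 0, G σ = p 0 (-σ) := fun σ h => if_pos h
  have hGp : ∀ σ ≥ 0, G σ = p σ 0 * exp (-B (-σ) σ) := by
    intro σ h
    rcases h.lt_or_eq with h | h
    · exact if_neg (not_le.2 h)
    · subst h
      simp [G, hB0]
  have form : ∀ τ ∈ Icc 0 T, ∀ η ∈ Icc (0:ℝ) 1, p τ η = G (τ - η) * exp (B (η - τ) τ) := by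
    intro τ hτ η hη
    have hfin : ∀ g : ℝ, p τ η * exp (-B (η - τ) τ) = g → p τ η = g * exp (B (η - τ) τ) := by
      intro g hg
      rw [← hg, mul_assoc, ← exp_add]
      simp
    apply hfin
    rcases le_total τ η with h | h
    · have := hconst (η - τ) 0 τ le_rfl hτ.1 hτ.2 (by linarith) (by linarith [hη.2])
      rw [hGn _ (by linarith)]
      simpa [hB0] using this
    · have := hconst (η - τ) (τ - η) τ (by linarith) (by linarith [hη.1]) hτ.2 (by linarith) (by linarith [hη.2])
      rw [hGp _ (by linarith)]
      simpa using this
  have hBdiag : ∀ a, ContDiff ℝ 1 (fun σ => B (a - σ) σ) := fun a =>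
    hB.comp (by fun_prop : ContDiff ℝ 1 fun σ : ℝ => (a - σ, σ))
  have hBd0 : ∀ a, HasDerivAt (fun σ => B (a - σ) σ) (deriv K (q 0 a)) 0 := by
    intro a
    have hf : HasFDerivAt (Function.uncurry B) (fderiv ℝ (Function.uncurry B) (a, 0)) (a, 0) :=
      (hB.differentiable (by norm_num) _).hasFDerivAt
    have e1 : fderiv ℝ (Function.uncurry B) (a, 0) (1, 0) = 0 := by
      have l : HasDerivAt (fun x : ℝ => (x, (0:ℝ))) (1, 0) a := (hasDerivAt_id a).prodMk (hasDerivAt_const a 0)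
      have := hf.comp_hasDerivAt a l
      have z : (Function.uncurry B ∘ fun x : ℝ => (x, (0:ℝ))) = fun _ => 0 := by
        ext x; simp [hB0]
      rw [z] at this
      exact this.unique (hasDerivAt_const _ _)
    have e2 : fderiv ℝ (Function.uncurry B) (a, 0) (0, 1) = deriv K (q 0 a) := by
      have l : HasDerivAt (fun x : ℝ => (a, x)) (0, 1) 0 := (hasDerivAt_const 0 a).prodMk (hasDerivAt_id 0)
      have := hf.comp_hasDerivAt 0 l
      have t := this.unique (hBs a 0)
      simpa using t
    have l : HasDerivAt (fun x : ℝ => (a - x, x)) (-1, 1) 0 := by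
      simpa using ((hasDerivAt_id (0:ℝ)).const_sub a).prodMk (hasDerivAt_id (0:ℝ))
    have hf' : HasFDerivAt (Function.uncurry B) (fderiv ℝ (Function.uncurry B) (a, 0)) (a - 0, 0) := by
      simpa using hf
    have := HasFDerivAt.comp_hasDerivAt (f := fun x : ℝ => (a - x, x)) 0 hf' l
    refine this.congr_deriv ?_
    have : ((-1, 1) : ℝ × ℝ) = -(1, 0) + (0, 1) := by simp
    rw [this, map_add, map_neg, e1, e2]
    simp
  let F : ℝ → ℝ := fun σ => (G (σ - 1) * exp (B (1 - σ) σ) + D) * exp (-B (0 - σ) σ)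
  have hGF : ∀ σ ∈ Icc 0 T, G σ = F σ := by
    intro σ hσ
    simp only [F]
    rw [hGp σ hσ.1, hb σ hσ, form σ hσ 1 ⟨zero_le_one, le_rfl⟩, zero_sub]
  have base : ContDiffOn ℝ 1 G (Icc (-1) 0) := by
    have : ContDiffOn ℝ 1 (fun σ => p 0 (-σ)) (Icc (-1) 0) :=
      hp0.comp (by fun_prop : ContDiff ℝ 1 fun σ : ℝ => -σ).contDiffOn
        (fun σ hσ => ⟨by linarith [hσ.2], by linarith [hσ.1]⟩)
    exact this.congr fun σ hσ => hGn σ hσ.2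
  have dG : ∀ σ ∈ Icc (-1 : ℝ) 0, ∀ a, HasDerivWithinAt (p 0) a (Icc 0 1) (-σ) →
      HasDerivWithinAt G (-a) (Icc (-1) 0) σ := by
    intro σ hσ a ha
    have l : HasDerivWithinAt (fun σ : ℝ => -σ) (-1) (Icc (-1) 0) σ := (hasDerivAt_neg σ).hasDerivWithinAt
    have := ha.comp σ l (fun σ hσ => ⟨by linarith [hσ.2], by linarith [hσ.1]⟩)
    have := this.congr_deriv (show a * -1 = -a by ring)
    exact this.congr (fun σ hσ => hGn σ hσ.2) (hGn σ hσ.2)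
  have dG0 : HasDerivWithinAt G (-a0) (Icc (-1) 0) 0 := dG 0 (by simp) a0 (by simpa using ha0)
  have dG1 : HasDerivWithinAt G (-a1) (Icc (-1) 0) (-1) := dG (-1) (by simp) a1 (by simpa using ha1)
  have dF0 : HasDerivWithinAt F (-a0) (Ici 0) 0 := by
    have l : HasDerivWithinAt (fun σ : ℝ => σ - 1) 1 (Icc 0 1) 0 :=
      ((hasDerivAt_id (0:ℝ)).sub_const 1).hasDerivWithinAt
    have g1 : HasDerivWithinAt (fun σ => G (σ - 1)) (-a1 * 1) (Icc 0 1) 0 := by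
      have h : HasDerivWithinAt G (-a1) (Icc (-1) 0) ((0:ℝ) - 1) := by simpa using dG1
      have hmap : MapsTo (fun σ : ℝ => σ - 1) (Icc 0 1) (Icc (-1) 0) := fun σ hσ =>
        ⟨by linarith [hσ.1], by linarith [hσ.2]⟩
      exact HasDerivWithinAt.comp (h := fun σ : ℝ => σ - 1) (0:ℝ) h l hmap
    have := ((g1.mul ((hBd0 1).exp.hasDerivWithinAt)).add_const D).mul ((hBd0 0).neg.exp.hasDerivWithinAt)
    refine (this.mono_of_mem_nhdsWithin (Icc_mem_nhdsGE zero_lt_one)).congr_deriv ?_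
    have e0 : G (-1) = p 0 1 := by rw [hGn _ (by norm_num)]; simp
    have e1 := hb 0 ⟨le_rfl, hT.le⟩
    simp [hB0, e0]
    linear_combination (-1 : ℝ) * hcomp + deriv K (q 0 0) * e1
  have ind : ∀ m : ℕ, ContDiffOn ℝ 1 G (Icc (-1) (min (m:ℝ) T)) := by
    intro m
    induction m with
    | zero => simpa [hT.le] using base
    | succ m ih =>
      have hpos : 0 < min ((m + 1 : ℕ):ℝ) T := lt_min (by positivity) hT
      have hF : ContDiffOn ℝ 1 F (Icc 0 (min ((m + 1 : ℕ):ℝ) T)) := by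
        have hG1 : ContDiffOn ℝ 1 (fun σ => G (σ - 1)) (Icc 0 (min ((m + 1 : ℕ):ℝ) T)) :=
          ih.comp (by fun_prop : ContDiff ℝ 1 fun σ : ℝ => σ - 1).contDiffOn
            (fun σ hσ => by
              have h1 := hσ.2.trans (min_le_left _ _)
              have h2 := hσ.2.trans (min_le_right _ _)
              push_cast at h1
              exact ⟨by linarith [hσ.1], le_min (by linarith) (by linarith)⟩)
        exact ((hG1.mul (hBdiag 1).exp.contDiffOn).add contDiffOn_const).mul (hBdiag 0).neg.exp.contDiffOn
      have hsub : ∀ σ ∈ Icc 0 (min ((m + 1 : ℕ):ℝ) T), G σ = F σ := fun σ hσ =>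
        hGF σ ⟨hσ.1, hσ.2.trans (min_le_right _ _)⟩
      exact glue G (-1) 0 _ (-a0) (by norm_num) hpos base (hF.congr hsub) dG0
        ((dF0.mono Icc_subset_Ici_self).congr hsub (hsub 0 ⟨le_rfl, hpos.le⟩))
  obtain ⟨m, hm⟩ := exists_nat_ge T
  have hG := ind m
  rw [min_eq_right hm] at hG
  have h1 : ContDiffOn ℝ 1 (fun v : ℝ × ℝ => G (v.1 - v.2)) (Icc 0 T ×ˢ Icc 0 1) :=
    hG.comp (by fun_prop : ContDiff ℝ 1 fun v : ℝ × ℝ => v.1 - v.2).contDiffOn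
      (fun v hv => ⟨by linarith [hv.1.1, hv.2.2], by linarith [hv.1.2, hv.2.1]⟩)
  have h2 : ContDiff ℝ 1 (fun v : ℝ × ℝ => B (v.2 - v.1) v.1) :=
    hB.comp (by fun_prop : ContDiff ℝ 1 fun v : ℝ × ℝ => (v.2 - v.1, v.1))
  exact (h1.mul h2.exp.contDiffOn).congr fun v hv => form v.1 hv.1 v.2 hv.2

lemma isOpen_time (T : ℝ≥0∞) : IsOpen {τ : ℝ | ENNReal.ofReal τ < T} :=
  isOpen_lt ENNReal.continuous_ofReal continuous_const

lemma Ico0_eq (T : ℝ≥0∞) : Ico0 T = Ici 0 ∩ {τ : ℝ | ENNReal.ofReal τ < T} := rfl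

lemma Ico0_mem_nhdsGE (T : ℝ≥0∞) {τ : ℝ} (h : τ ∈ Ico0 T) : Ico0 T ∈ 𝓝[Ici 0] τ := by
  rw [Ico0_eq]
  exact inter_mem self_mem_nhdsWithin (mem_nhdsWithin_of_mem_nhds ((isOpen_time T).mem_nhds h.2))

lemma Ico0_uniqueDiff (T : ℝ≥0∞) : UniqueDiffOn ℝ (Ico0 T) :=
  (uniqueDiffOn_Ici 0).inter (isOpen_time T)

lemma Ico0_exists_gt (T : ℝ≥0∞) {τ : ℝ} (h : τ ∈ Ico0 T) :
    ∃ T1 : ℝ, τ < T1 ∧ ENNReal.ofReal T1 < T := by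
  obtain ⟨r, h1, h2⟩ := ENNReal.lt_iff_exists_nnreal_btwn.1 h.2
  refine ⟨r, ?_, by simpa using h2⟩
  rw [← ENNReal.ofReal_coe_nnreal] at h1
  exact (ENNReal.ofReal_lt_ofReal_iff_of_nonneg h.1).1 h1

/-- Theorem 3.4: `C²` regularity of the solution under a second-order compatibility condition
on the initial datum. -/
theorem stmt4 (ΦF : ℝ) (hΦF : 0 < ΦF) (K : ℝ → ℝ) (hK : KAssump K ΦF)
    (Qinit : ℝ → ℝ) (hA2 : A2 K ΦF Qinit)
    (hreg2 : ContDiffOn ℝ 2 Qinit (Icc 0 1))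
    (hcompat2 :
      derivWithin (fun η => derivWithin Qinit (Icc 0 1) η) (Icc 0 1) 1
          - derivWithin (fun η => derivWithin Qinit (Icc 0 1) η) (Icc 0 1) 0
        = deriv K ΦF * derivWithin Qinit (Icc 0 1) 1
          - deriv K 0 * derivWithin Qinit (Icc 0 1) 0)
    (τstar : ℝ≥0∞) (Q : ℝ → ℝ → ℝ) (N : ℝ → ℝ)
    (hsol : IsQSol K ΦF τstar Qinit Q N)
    (hmax : ∀ (T : ℝ≥0∞) (Q' : ℝ → ℝ → ℝ) (N' : ℝ → ℝ),
      IsQSol K ΦF T Qinit Q' N' → T ≤ τstar) :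
    ContDiffOn ℝ 1 N (Ico0 τstar) ∧
    ContDiffOn ℝ 2 (Function.uncurry Q) (Ico0 τstar ×ˢ Icc (0 : ℝ) 1) := by
  obtain ⟨C, hC⟩ := hK.bdd1
  obtain ⟨C2, hC2⟩ := hK.bdd2
  set S : Set (ℝ × ℝ) := Ico0 τstar ×ˢ Icc (0 : ℝ) 1 with hS
  have uS : UniqueDiffOn ℝ S := (Ico0_uniqueDiff τstar).prod (uniqueDiffOn_Icc zero_lt_one)
  have u01 : UniqueDiffOn ℝ (Icc (0:ℝ) 1) := uniqueDiffOn_Icc zero_lt_one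
  set Df := fderivWithin ℝ (Function.uncurry Q) S with hDf
  have cDf : ContinuousOn Df S := hsol.reg.continuousOn_fderivWithin uS le_rfl
  let P : ℝ → ℝ → ℝ := fun τ η => Df (τ, η) (0, 1)
  let R : ℝ → ℝ → ℝ := fun τ η => Df (τ, η) (1, 0)
  have cP : ContinuousOn (Function.uncurry P) S := cDf.clm_apply continuousOn_const
  have cR : ContinuousOn (Function.uncurry R) S := cDf.clm_apply continuousOn_const
  have cQ : ContinuousOn (Function.uncurry Q) S := hsol.reg.continuousOn
  have hfd : ∀ v ∈ S, HasFDerivWithinAt (Function.uncurry Q) (Df v) S v := fun v hv =>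
    (hsol.reg.differentiableOn (by norm_num) v hv).hasFDerivWithinAt
  have hP : ∀ τ ∈ Ico0 τstar, ∀ η ∈ Icc (0:ℝ) 1, HasDerivWithinAt (Q τ) (P τ η) (Icc 0 1) η := by
    intro τ hτ η hη
    have l : HasDerivWithinAt (fun x : ℝ => (τ, x)) (0, 1) (Icc 0 1) η :=
      ((hasDerivAt_const η τ).prodMk (hasDerivAt_id η)).hasDerivWithinAt
    exact HasFDerivWithinAt.comp_hasDerivWithinAt (f := fun x : ℝ => (τ, x)) η (hfd (τ, η) ⟨hτ, hη⟩) l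
      (fun x hx => ⟨hτ, hx⟩)
  have hR : ∀ τ ∈ Ico0 τstar, ∀ η ∈ Icc (0:ℝ) 1,
      HasDerivWithinAt (fun s => Q s η) (R τ η) (Ici 0) τ := by
    intro τ hτ η hη
    have l : HasDerivWithinAt (fun x : ℝ => (x, η)) (1, 0) (Ico0 τstar) τ :=
      ((hasDerivAt_id τ).prodMk (hasDerivAt_const τ η)).hasDerivWithinAt
    exact (HasFDerivWithinAt.comp_hasDerivWithinAt (f := fun x : ℝ => (x, η)) τ (hfd (τ, η) ⟨hτ, hη⟩) l
      (fun x hx => ⟨hx, hη⟩)).mono_of_mem_nhdsWithin (Ico0_mem_nhdsGE τstar hτ)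
  have ePE : ∀ τ ∈ Ico0 τstar, ∀ η ∈ Icc (0:ℝ) 1, pdEta Q τ η = P τ η := fun τ hτ η hη =>
    (hP τ hτ η hη).derivWithin (u01 η hη)
  have ePT : ∀ τ ∈ Ico0 τstar, ∀ η ∈ Icc (0:ℝ) 1, pdTau Q τ η = R τ η := fun τ hτ η hη =>
    (hR τ hτ η hη).derivWithin (uniqueDiffOn_Ici 0 τ hτ.1)
  have secη : ∀ (f : ℝ → ℝ → ℝ), ContinuousOn (Function.uncurry f) S → ∀ τ ∈ Ico0 τstar,
      ContinuousOn (f τ) (Icc 0 1) := by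
    intro f hf τ hτ
    exact hf.comp (by fun_prop : Continuous fun x : ℝ => (τ, x)).continuousOn (fun x hx => ⟨hτ, hx⟩)
  have pde : ∀ τ ∈ Ico0 τstar, ∀ η ∈ Icc (0:ℝ) 1, R τ η + P τ η = 1 / N τ + K (Q τ η) := by
    intro τ hτ
    have h : EqOn (fun η => R τ η + P τ η) (fun η => 1 / N τ + K (Q τ η)) (Ioo 0 1) := by
      intro η hη
      have hη' := Ioo_subset_Icc_self hη
      have := hsol.pde τ hτ η hη
      rw [ePE τ hτ η hη', ePT τ hτ η hη'] at this
      exact this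
    refine h.of_subset_closure (t := Icc 0 1) ((secη R cR τ hτ).add (secη P cP τ hτ))
      (continuousOn_const.add (hK.smooth.continuous.comp_continuousOn (secη Q cQ τ hτ)))
      Ioo_subset_Icc_self ?_
    rw [closure_Ioo zero_ne_one]
  have hR0 : ∀ τ ∈ Ico0 τstar, R τ 0 = 0 := by
    intro τ hτ
    have h0 : (0:ℝ) ∈ Icc (0:ℝ) 1 := ⟨le_rfl, zero_le_one⟩
    have h1 : HasDerivWithinAt (fun s => Q s 0) 0 (Ici 0) τ := by
      refine (hasDerivWithinAt_const τ (Ici 0) (0:ℝ)).congr_of_eventuallyEq ?_ (hsol.bc τ hτ)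
      filter_upwards [Ico0_mem_nhdsGE τstar hτ] with s hs using hsol.bc s hs
    rw [← (hR τ hτ 0 h0).derivWithin (uniqueDiffOn_Ici 0 τ hτ.1), h1.derivWithin (uniqueDiffOn_Ici 0 τ hτ.1)]
  have hNd : ∀ τ ∈ Ico0 τstar, 1 / N τ = P τ 1 - K ΦF := by
    intro τ hτ
    rw [hsol.Ndef τ hτ, ePE τ hτ 1 ⟨zero_le_one, le_rfl⟩]
  -- regularity of P on compact time intervals
  have hmain : ∀ T1 : ℝ, 0 < T1 → ENNReal.ofReal T1 < τstar →
      ContDiffOn ℝ 1 (Function.uncurry P) (Icc 0 T1 ×ˢ Icc 0 1) := by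
    intro T1 hT1 hT1s
    have hI : ∀ s ∈ Icc 0 T1, s ∈ Ico0 τstar := fun s hs =>
      ⟨hs.1, (ENNReal.ofReal_le_ofReal hs.2).trans_lt hT1s⟩
    have h0I : (0:ℝ) ∈ Ico0 τstar := hI 0 ⟨le_rfl, hT1.le⟩
    let c : ℝ → ℝ := fun s => max 0 (min T1 s)
    let e : ℝ → ℝ := fun x => max 0 (min 1 x)
    have cc : Continuous c := by fun_prop
    have ce : Continuous e := by fun_prop
    have hcm : ∀ s, c s ∈ Icc 0 T1 := fun s => ⟨le_max_left _ _, max_le hT1.le (min_le_left _ _)⟩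
    have hem : ∀ s, e s ∈ Icc (0:ℝ) 1 := fun s => ⟨le_max_left _ _, max_le zero_le_one (min_le_left _ _)⟩
    have hcid : ∀ s ∈ Icc 0 T1, c s = s := fun s hs => by
      simp only [c]; rw [min_eq_right hs.2, max_eq_right hs.1]
    have heid : ∀ s ∈ Icc (0:ℝ) 1, e s = s := fun s hs => by
      simp only [e]; rw [min_eq_right hs.2, max_eq_right hs.1]
    have heL : ∀ x y, |e x - e y| ≤ |x - y| := fun x y => by
      have h1 := abs_max_sub_max_le_abs (min 1 x) (min 1 y) 0
      have h2 := abs_inf_sub_inf_le_abs x y 1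
      simp only [e]
      rw [max_comm 0, max_comm 0]
      refine h1.trans ?_
      rw [min_comm 1, min_comm 1]
      exact h2
    have lift : ∀ f : ℝ → ℝ → ℝ, ContinuousOn (Function.uncurry f) S →
        Continuous (Function.uncurry fun s x => f (c s) (e x)) := by
      intro f hf
      exact hf.comp_continuous (f := fun v : ℝ × ℝ => (c v.1, e v.2)) (by fun_prop)
        (fun v => ⟨hI _ (hcm _), hem _⟩)
    have hcomp : IsCompact (Icc 0 T1 ×ˢ Icc (0:ℝ) 1) := isCompact_Icc.prod isCompact_Icc
    obtain ⟨M, hM⟩ := hcomp.exists_bound_of_continuousOn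
      (cP.mono (prod_mono (fun s hs => hI s hs) subset_rfl : Icc 0 T1 ×ˢ Icc (0:ℝ) 1 ⊆ S))
    have hMP : ∀ s ∈ Icc 0 T1, ∀ x ∈ Icc (0:ℝ) 1, |P s x| ≤ M := fun s hs x hx => hM (s, x) ⟨hs, hx⟩
    have hM0 : 0 ≤ M := (abs_nonneg _).trans (hMP 0 ⟨le_rfl, hT1.le⟩ 0 ⟨le_rfl, zero_le_one⟩)
    have hNc : Continuous fun s => 1 / N (c s) := by
      have : Continuous fun s => N (c s) := hsol.Ncont.comp_continuous cc (fun s => hI _ (hcm s))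
      exact continuous_const.div this fun s => (hsol.Npos _ (hI _ (hcm s))).ne'
    have hQ0 : ∀ η ∈ Icc (0:ℝ) 1, Q 0 η = Qinit η := hsol.init
    have hP0 : ∀ η ∈ Icc (0:ℝ) 1, P 0 η = derivWithin Qinit (Icc 0 1) η := by
      intro η hη
      rw [← ePE 0 h0I η hη]
      exact derivWithin_congr hQ0 (hQ0 η hη)
    have c00 : c 0 = 0 := hcid 0 ⟨le_rfl, hT1.le⟩
    have e00 : e 0 = 0 := heid 0 ⟨le_rfl, zero_le_one⟩
    have e11 : e 1 = 1 := heid 1 ⟨zero_le_one, le_rfl⟩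
    have m0 : (0:ℝ) ∈ Icc (0:ℝ) 1 := ⟨le_rfl, zero_le_one⟩
    have m1 : (1:ℝ) ∈ Icc (0:ℝ) 1 := ⟨zero_le_one, le_rfl⟩
    have hp0 : ∀ η ∈ Icc (0:ℝ) 1, P (c 0) (e η) = derivWithin Qinit (Icc 0 1) η := by
      intro η hη
      rw [c00, heid η hη, hP0 η hη]
    have hQi : ContDiffOn ℝ 1 (derivWithin Qinit (Icc 0 1)) (Icc 0 1) := by
      have : ContDiffOn ℝ (1 + 1) Qinit (Icc 0 1) := by simpa [one_add_one_eq_two] using hreg2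
      exact ((contDiffOn_succ_iff_derivWithin u01).1 this).2.2
    have hQid : ∀ η ∈ Icc (0:ℝ) 1, HasDerivWithinAt (fun x => P (c 0) (e x))
        (derivWithin (fun η => derivWithin Qinit (Icc 0 1) η) (Icc 0 1) η) (Icc 0 1) η := by
      intro η hη
      exact ((hQi.differentiableOn (by norm_num) η hη).hasDerivWithinAt).congr hp0 (hp0 η hη)
    have hcore := coreReg K hK.smooth C C2 hC hC2 T1 M (K 0 - K ΦF) hT1
      (fun s x => Q (c s) (e x)) (fun s x => P (c s) (e x)) (fun s => 1 / N (c s))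
      (lift Q cQ) (lift P cP) hNc (fun s x => hMP _ (hcm s) _ (hem x))
      (fun s x hx => by
        have hx' := Ioo_subset_Icc_self hx
        have h := (hP (c s) (hI _ (hcm s)) x hx').hasDerivAt (Icc_mem_nhds hx.1 hx.2)
        simp only [heid x hx']
        refine h.congr_of_eventuallyEq ?_
        filter_upwards [Icc_mem_nhds hx.1 hx.2] with y hy
        rw [heid y hy])
      (fun s x y => by
        have := Convex.norm_image_sub_le_of_norm_hasDerivWithin_le (f := Q (c s)) (f' := P (c s)) (C := M)
          (s := Icc (0:ℝ) 1) (x := e y) (y := e x) (fun z hz => hP (c s) (hI _ (hcm s)) z hz)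
          (fun z hz => hMP _ (hcm s) z hz) (convex_Icc 0 1) (hem y) (hem x)
        simp only [Real.norm_eq_abs] at this
        exact this.trans (mul_le_mul_of_nonneg_left (heL x y) hM0))
      (fun s x hx => by
        have : e x = e 0 := by
          rw [e00]; simp only [e]; exact max_eq_left ((min_le_right _ _).trans hx)
        simp only [this])
      (fun s x hx => by
        have : e x = e 1 := by
          rw [e11]; simp only [e]; rw [min_eq_left hx]; exact max_eq_right zero_le_one
        simp only [this])
      (fun a s hs has => by
        have hs' := Ioo_subset_Icc_self hs
        have has' := Ioo_subset_Icc_self has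
        have hSn : S ∈ 𝓝 (s, a + s) := by
          refine mem_of_superset (prod_mem_nhds (Icc_mem_nhds hs.1 hs.2) (Icc_mem_nhds has.1 has.2)) ?_
          exact prod_mono (fun s hs => hI s hs) subset_rfl
        have h1 := (hfd (s, a + s) ⟨hI s hs', has'⟩).hasFDerivAt hSn
        have l : HasDerivAt (fun x : ℝ => (x, a + x)) (1, 1) s :=
          (hasDerivAt_id s).prodMk ((hasDerivAt_id s).const_add a)
        have h2 := HasFDerivAt.comp_hasDerivAt (f := fun x : ℝ => (x, a + x)) s h1 l
        have hval : Df (s, a + s) (1, 1) = 1 / N s + K (Q s (a + s)) := by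
          rw [← pde s (hI s hs') (a + s) has']
          have : ((1, 1) : ℝ × ℝ) = (1, 0) + (0, 1) := by simp
          rw [this, map_add]
        rw [hval] at h2
        simp only [hcid s hs', heid _ has']
        refine h2.congr_of_eventuallyEq ?_
        have ct : Continuous (fun x : ℝ => a + x) := by fun_prop
        filter_upwards [Icc_mem_nhds hs.1 hs.2,
          ct.continuousAt.preimage_mem_nhds (Icc_mem_nhds has.1 has.2)] with y hy1 hy2
        rw [hcid y hy1, heid _ hy2]
        rfl)
      (fun s hs => by
        have hs' := hI s hs
        simp only [hcid s hs, e00, e11]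
        have h1 := pde s hs' 0 m0
        rw [hR0 s hs', hNd s hs', hsol.bc s hs'] at h1
        linarith)
      (hQi.congr hp0) _ _ (hQid 0 m0) (hQid 1 m1)
      (by
        simp only [hP0 0 m0, hP0 1 m1, c00, e00, e11, hQ0 0 m0, hQ0 1 m1, hsol.init0, hsol.init1]
        exact hcompat2)
    refine hcore.congr fun v hv => ?_
    simp only [Function.uncurry, hcid v.1 hv.1, heid v.2 hv.2]
  have hPS : ContDiffOn ℝ 1 (Function.uncurry P) S := by
    intro v hv
    obtain ⟨T1, h1, h2⟩ := Ico0_exists_gt τstar hv.1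
    have h0 : 0 ≤ v.1 := hv.1.1
    refine (hmain T1 (by linarith) h2 v ⟨⟨h0, h1.le⟩, hv.2⟩).mono_of_mem_nhdsWithin ?_
    rw [mem_nhdsWithin]
    exact ⟨{w | w.1 < T1}, isOpen_lt continuous_fst continuous_const, h1,
      fun w hw => ⟨⟨hw.2.1.1, le_of_lt hw.1⟩, hw.2.2⟩⟩
  have hninv : ContDiffOn ℝ 1 (fun τ => P τ 1 - K ΦF) (Ico0 τstar) := by
    have : ContDiffOn ℝ 1 (fun τ => P τ 1) (Ico0 τstar) :=
      hPS.comp (by fun_prop : ContDiff ℝ 1 fun τ : ℝ => (τ, (1:ℝ))).contDiffOn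
        (fun τ hτ => ⟨hτ, zero_le_one, le_rfl⟩)
    exact this.sub contDiffOn_const
  have hNreg : ContDiffOn ℝ 1 N (Ico0 τstar) := by
    have hne : ∀ τ ∈ Ico0 τstar, P τ 1 - K ΦF ≠ 0 := fun τ hτ => by
      rw [← hNd τ hτ]
      exact (one_div_pos.2 (hsol.Npos τ hτ)).ne'
    refine (hninv.inv hne).congr fun τ hτ => ?_
    simp only [Pi.inv_apply]
    rw [← hNd τ hτ]
    simp
  refine ⟨hNreg, ?_⟩
  have hRS : ContDiffOn ℝ 1 (Function.uncurry R) S := by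
    have h1 : ContDiffOn ℝ 1 (fun v : ℝ × ℝ => P v.1 1 - K ΦF) S :=
      hninv.comp contDiff_fst.contDiffOn (fun v hv => hv.1)
    have h2 : ContDiffOn ℝ 1 (fun v : ℝ × ℝ => K (Q v.1 v.2)) S :=
      (hK.smooth.of_le (by norm_num)).comp_contDiffOn hsol.reg
    refine ((h1.add h2).sub hPS).congr fun v hv => ?_
    have := pde v.1 hv.1 v.2 hv.2
    rw [hNd v.1 hv.1] at this
    simp only [Function.uncurry]
    linarith
  have h2 : ContDiffOn ℝ (1 + 1) (Function.uncurry Q) S := by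
    rw [contDiffOn_succ_iff_hasFDerivWithinAt_of_uniqueDiffOn uS]
    refine ⟨by simp, Df, ?_, hfd⟩
    have e : Df = fun v : ℝ × ℝ => R v.1 v.2 • ContinuousLinearMap.fst ℝ ℝ ℝ
        + P v.1 v.2 • ContinuousLinearMap.snd ℝ ℝ ℝ := by
      ext v <;> simp [R, P]
    rw [e]
    exact (hRS.smul contDiffOn_const).add (hPS.smul contDiffOn_const)
  simpa [one_add_one_eq_two] using h2
end
end

section
/- Let (Q₁,N₁) and (Q₂,N₂) be two classical solutions of the Q-system, both existing up to time τ. Then e^{k_min·τ} · ‖∂_ηQ₁(0,·) − ∂_ηQ₂(0,·)‖_{L¹(0,1)} ≤ ‖∂_ηQ₁(τ,·) − ∂_ηQ₂(τ,·)‖_{L¹(0,1)} ≤ e^{k_max·τ} · ‖∂_ηQ₁(0,·) − ∂_ηQ₂(0,·)‖_{L¹(0,1)}. -/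
open Real Set MeasureTheory Filter Topology
open scoped ENNReal

noncomputable section

/-- Bounded measurable times continuous is interval integrable. -/
lemma aux_intble {σ f : ℝ → ℝ} (hσ : Measurable σ) (hσ1 : ∀ x, |σ x| ≤ 1) (hf : Continuous f)
    (a b : ℝ) : IntervalIntegrable (fun x => σ x * f x) volume a b := by
  refine (hf.intervalIntegrable a b).mono_fun ?_ ?_
  · exact (hσ.mul hf.measurable).aestronglyMeasurable
  · refine Eventually.of_forall fun x => ?_
    simp only [norm_mul, Real.norm_eq_abs]
    nlinarith [hσ1 x, abs_nonneg (f x)]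

lemma level_aux {v1 v2 σ : ℝ → ℝ} (h1 : Continuous v1) (h2 : Continuous v2)
    (n1 : ∀ x, 0 ≤ v1 x) (hσ : Measurable σ) (hσ1 : ∀ x, |σ x| ≤ 1)
    (hσ2 : ∀ x, σ x * (v1 x - v2 x) = |v1 x - v2 x|) {e1 e2 : ℝ} (he1 : 0 ≤ e1) (he : e1 ≤ e2)
    (he2 : e2 ≤ 1) (hX : ∫ x in e1..e2, v1 x = ∫ x in (0:ℝ)..e2, (v1 x - v2 x))
    (htot : ∫ x in (0:ℝ)..1, (v1 x - v2 x) = 0) :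
    0 ≤ (∫ x in e1..1, σ x * v1 x) - ∫ x in e2..1, σ x * v2 x ∧
    (∫ x in e1..1, σ x * v1 x) - (∫ x in e2..1, σ x * v2 x) ≤ ∫ x in (0:ℝ)..1, |v1 x - v2 x| := by
  have I1 := fun a b => aux_intble hσ hσ1 h1 a b
  have I2 := fun a b => aux_intble hσ hσ1 h2 a b
  have hp : Continuous (fun x => v1 x - v2 x) := h1.sub h2
  have E1 : (∫ x in e1..1, σ x * v1 x) = (∫ x in e1..e2, σ x * v1 x) + ∫ x in e2..1, σ x * v1 x :=
    (intervalIntegral.integral_add_adjacent_intervals (I1 _ _) (I1 _ _)).symm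
  have E2 : (∫ x in e2..1, σ x * v1 x) - (∫ x in e2..1, σ x * v2 x)
      = ∫ x in e2..1, |v1 x - v2 x| := by
    rw [← intervalIntegral.integral_sub (I1 _ _) (I2 _ _)]
    refine intervalIntegral.integral_congr fun x _ => ?_
    simp only [← hσ2 x]; ring
  have E3 : (∫ x in (0:ℝ)..e2, |v1 x - v2 x|) + (∫ x in e2..1, |v1 x - v2 x|)
      = ∫ x in (0:ℝ)..1, |v1 x - v2 x| :=
    intervalIntegral.integral_add_adjacent_intervals (hp.abs.intervalIntegrable _ _)
      (hp.abs.intervalIntegrable _ _)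
  have E4 : (∫ x in (0:ℝ)..e2, (v1 x - v2 x)) + (∫ x in e2..1, (v1 x - v2 x))
      = ∫ x in (0:ℝ)..1, (v1 x - v2 x) :=
    intervalIntegral.integral_add_adjacent_intervals (hp.intervalIntegrable _ _)
      (hp.intervalIntegrable _ _)
  have B1 : |∫ x in (0:ℝ)..e2, (v1 x - v2 x)| ≤ ∫ x in (0:ℝ)..e2, |v1 x - v2 x| :=
    intervalIntegral.abs_integral_le_integral_abs (he1.trans he)
  have B2 : |∫ x in e2..1, (v1 x - v2 x)| ≤ ∫ x in e2..1, |v1 x - v2 x| :=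
    intervalIntegral.abs_integral_le_integral_abs he2
  have B3 : (∫ x in e1..e2, σ x * v1 x) ≤ ∫ x in e1..e2, v1 x := by
    refine intervalIntegral.integral_mono_on he (I1 _ _) (h1.intervalIntegrable _ _) fun x _ => ?_
    nlinarith [n1 x, (abs_le.1 (hσ1 x)).2]
  have B4 : (∫ x in e1..e2, -v1 x) ≤ ∫ x in e1..e2, σ x * v1 x := by
    refine intervalIntegral.integral_mono_on he (h1.neg.intervalIntegrable _ _) (I1 _ _) fun x _ => ?_
    nlinarith [n1 x, (abs_le.1 (hσ1 x)).1]
  rw [intervalIntegral.integral_neg] at B4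
  have := abs_le.1 B1
  have := abs_le.1 B2
  constructor <;> linarith

lemma crit_pt {v : ℝ → ℝ} (h1 : Continuous v) (n1 : ∀ x, 0 ≤ v x) {s : ℝ} (hs0 : 0 < s)
    (hs : s < ∫ x in (0:ℝ)..1, v x) :
    ∃ e ∈ Icc (0:ℝ) 1, (∫ x in (0:ℝ)..e, v x) = s ∧ ∀ σ : ℝ → ℝ,
      (∫ x in (0:ℝ)..1, σ x * (if s < ∫ y in (0:ℝ)..x, v y then v x else 0))
        = ∫ x in e..1, σ x * v x := by
  set q : ℝ → ℝ := fun x => ∫ y in (0:ℝ)..x, v y with hq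
  have hqd : ∀ x, HasDerivAt q (v x) x := fun x =>
    intervalIntegral.integral_hasDerivAt_right (h1.intervalIntegrable _ _)
      (h1.stronglyMeasurableAtFilter _ _) h1.continuousAt
  have hqc : Continuous q := continuous_iff_continuousAt.2 fun x => (hqd x).continuousAt
  have hqm : Monotone q := monotone_of_hasDerivAt_nonneg hqd n1
  have hq0 : q 0 = 0 := by simp [hq]
  have hne : (Icc (0:ℝ) 1 ∩ q ⁻¹' {s}).Nonempty := by
    obtain ⟨x, hx, hxs⟩ := intermediate_value_Icc (zero_le_one' ℝ) hqc.continuousOn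
      (show s ∈ Icc (q 0) (q 1) from ⟨by rw [hq0]; exact hs0.le, hs.le⟩)
    exact ⟨x, hx, hxs⟩
  obtain ⟨e, ⟨heI, hes⟩, hmax⟩ := (isCompact_Icc.inter_right
    (isClosed_singleton.preimage hqc)).exists_isGreatest hne
  have hes' : q e = s := hes
  refine ⟨e, heI, hes', fun σ => ?_⟩
  rw [intervalIntegral.integral_of_le zero_le_one, intervalIntegral.integral_of_le heI.2]
  have hset : Ioc e 1 = Ioc 0 1 ∩ Ioc e 1 := by
    rw [inter_eq_right.2]; exact Ioc_subset_Ioc_left heI.1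
  rw [hset, ← setIntegral_indicator measurableSet_Ioc]
  refine setIntegral_congr_fun measurableSet_Ioc fun x hx => ?_
  simp only [indicator]
  by_cases hxe : e < x
  · have : s < q x := by
      refine lt_of_le_of_ne (hes' ▸ hqm hxe.le) fun h => ?_
      exact absurd (hmax ⟨⟨hx.1.le, hx.2⟩, h.symm⟩) (not_le.2 hxe)
    rw [if_pos (show x ∈ Ioc e 1 from ⟨hxe, hx.2⟩), if_pos this]
  · have : ¬ s < q x := not_lt.2 (hes' ▸ hqm (not_lt.1 hxe))
    rw [if_neg (fun h : x ∈ Ioc e 1 => hxe h.1), if_neg this, mul_zero]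

lemma level_bound {v1 v2 σ : ℝ → ℝ} (h1 : Continuous v1) (h2 : Continuous v2)
    (n1 : ∀ x, 0 ≤ v1 x) (n2 : ∀ x, 0 ≤ v2 x) (hσ : Measurable σ) (hσ1 : ∀ x, |σ x| ≤ 1)
    (hσ2 : ∀ x, σ x * (v1 x - v2 x) = |v1 x - v2 x|) {Φ s : ℝ}
    (hΦ1 : ∫ x in (0:ℝ)..1, v1 x = Φ) (hΦ2 : ∫ x in (0:ℝ)..1, v2 x = Φ)
    (hs0 : 0 < s) (hs : s < Φ) :
    0 ≤ (∫ x in (0:ℝ)..1, σ x * (if s < ∫ y in (0:ℝ)..x, v1 y then v1 x else 0))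
        - (∫ x in (0:ℝ)..1, σ x * (if s < ∫ y in (0:ℝ)..x, v2 y then v2 x else 0)) ∧
    (∫ x in (0:ℝ)..1, σ x * (if s < ∫ y in (0:ℝ)..x, v1 y then v1 x else 0))
        - (∫ x in (0:ℝ)..1, σ x * (if s < ∫ y in (0:ℝ)..x, v2 y then v2 x else 0))
      ≤ ∫ x in (0:ℝ)..1, |v1 x - v2 x| := by
  obtain ⟨e1, ⟨h10, h11⟩, hq1, H1⟩ := crit_pt h1 n1 hs0 (hΦ1 ▸ hs)
  obtain ⟨e2, ⟨h20, h21⟩, hq2, H2⟩ := crit_pt h2 n2 hs0 (hΦ2 ▸ hs)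
  rw [H1, H2]
  have J1 := fun a b => h1.intervalIntegrable (μ := volume) a b
  have J2 := fun a b => h2.intervalIntegrable (μ := volume) a b
  rcases le_total e1 e2 with he | he
  · refine level_aux h1 h2 n1 hσ hσ1 hσ2 h10 he h21 ?_ ?_
    · rw [intervalIntegral.integral_sub (J1 _ _) (J2 _ _), hq2, ← hq1]
      have := intervalIntegral.integral_add_adjacent_intervals (J1 0 e1) (J1 e1 e2)
      linarith
    · rw [intervalIntegral.integral_sub (J1 _ _) (J2 _ _)]; linarith
  · have := level_aux (σ := fun x => -σ x) h2 h1 n2 hσ.neg (fun x => by simpa using hσ1 x)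
      (fun x => by rw [abs_sub_comm, ← hσ2]; ring) h20 he h11 ?_ ?_
    · simp only [neg_mul, intervalIntegral.integral_neg, fun x => abs_sub_comm (v2 x) (v1 x)] at this
      constructor <;> linarith
    · rw [intervalIntegral.integral_sub (J2 _ _) (J1 _ _), hq1, ← hq2]
      have := intervalIntegral.integral_add_adjacent_intervals (J2 0 e2) (J2 e2 e1)
      linarith
    · rw [intervalIntegral.integral_sub (J2 _ _) (J1 _ _)]; linarith

lemma fub {v σ a : ℝ → ℝ} (h1 : Continuous v) (n1 : ∀ x, 0 ≤ v x) (ha : Continuous a)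
    (hσ : Measurable σ) (hσ1 : ∀ x, |σ x| ≤ 1) {Φ : ℝ} (hΦ0 : 0 ≤ Φ)
    (hΦ1 : ∫ x in (0:ℝ)..1, v x = Φ) :
    IntervalIntegrable (fun s => a s * ∫ x in (0:ℝ)..1,
        σ x * (if s < ∫ y in (0:ℝ)..x, v y then v x else 0)) volume 0 Φ ∧
    (∫ s in (0:ℝ)..Φ, a s * ∫ x in (0:ℝ)..1,
        σ x * (if s < ∫ y in (0:ℝ)..x, v y then v x else 0))
      = ∫ x in (0:ℝ)..1, σ x * ((∫ s in (0:ℝ)..(∫ y in (0:ℝ)..x, v y), a s) * v x) := by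
  set q : ℝ → ℝ := fun x => ∫ y in (0:ℝ)..x, v y with hq
  have hqd : ∀ x, HasDerivAt q (v x) x := fun x =>
    intervalIntegral.integral_hasDerivAt_right (h1.intervalIntegrable _ _)
      (h1.stronglyMeasurableAtFilter _ _) h1.continuousAt
  have hqc : Continuous q := continuous_iff_continuousAt.2 fun x => (hqd x).continuousAt
  have hqm : Monotone q := monotone_of_hasDerivAt_nonneg hqd n1
  have hq0 : q 0 = 0 := by simp [hq]
  set F : ℝ → ℝ → ℝ := fun s x => a s * (σ x * (if s < q x then v x else 0)) with hF
  have hFint : Integrable (Function.uncurry F)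
      ((volume.restrict (Ioc 0 Φ)).prod (volume.restrict (Ioc (0:ℝ) 1))) := by
    have A : Integrable a (volume.restrict (Ioc 0 Φ)) :=
      (intervalIntegrable_iff_integrableOn_Ioc_of_le hΦ0).1 (ha.intervalIntegrable _ _)
    have V : Integrable v (volume.restrict (Ioc (0:ℝ) 1)) :=
      (intervalIntegrable_iff_integrableOn_Ioc_of_le zero_le_one).1 (h1.intervalIntegrable _ _)
    refine (A.mul_prod V).mono ?_ ?_
    · refine Measurable.aestronglyMeasurable ?_
      simp only [hF, Function.uncurry_def]
      refine (ha.measurable.comp measurable_fst).mul ((hσ.comp measurable_snd).mul ?_)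
      refine Measurable.ite ?_ (h1.measurable.comp measurable_snd) measurable_const
      exact measurableSet_lt measurable_fst (hqc.measurable.comp measurable_snd)
    · refine Eventually.of_forall fun z => ?_
      simp only [hF, Function.uncurry_def, norm_mul, Real.norm_eq_abs]
      refine mul_le_mul_of_nonneg_left ?_ (abs_nonneg _)
      have : |if z.1 < q z.2 then v z.2 else 0| ≤ |v z.2| := by
        split_ifs <;> simp
      nlinarith [hσ1 z.2, abs_nonneg (v z.2), abs_nonneg (σ z.2),
        abs_nonneg (if z.1 < q z.2 then v z.2 else 0)]
  have pull : ∀ s, (∫ x in Ioc (0:ℝ) 1, F s x)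
      = a s * ∫ x in (0:ℝ)..1, σ x * (if s < q x then v x else 0) := fun s => by
    rw [intervalIntegral.integral_of_le zero_le_one, ← integral_const_mul]
  constructor
  · rw [intervalIntegrable_iff_integrableOn_Ioc_of_le hΦ0]
    have := hFint.integral_prod_left
    simp only [Function.uncurry_def, pull] at this
    exact this
  · change (∫ s in (0:ℝ)..Φ, a s * ∫ x in (0:ℝ)..1, σ x * (if s < q x then v x else 0))
      = ∫ x in (0:ℝ)..1, σ x * ((∫ s in (0:ℝ)..(q x), a s) * v x)
    simp_rw [← pull]
    rw [intervalIntegral.integral_of_le hΦ0, intervalIntegral.integral_of_le zero_le_one]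
    rw [integral_integral_swap hFint]
    refine setIntegral_congr_fun measurableSet_Ioc fun x hx => ?_
    have hx0 : 0 ≤ q x := hq0 ▸ hqm hx.1.le
    have hx1 : q x ≤ Φ := hΦ1 ▸ hqm hx.2
    simp only [hF]
    have : ∀ s, a s * (σ x * (if s < q x then v x else 0))
        = (σ x * v x) * (Iio (q x)).indicator a s := fun s => by
      simp only [indicator, mem_Iio]; split_ifs <;> ring
    simp_rw [this]
    rw [integral_const_mul, setIntegral_indicator measurableSet_Iio,
      intervalIntegral.integral_of_le hx0, integral_Ioc_eq_integral_Ioo]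
    have : Ioc 0 Φ ∩ Iio (q x) = Ioo 0 (q x) := by
      ext y; simp only [mem_inter_iff, mem_Ioc, mem_Iio, mem_Ioo]
      constructor
      · rintro ⟨⟨h, _⟩, h'⟩; exact ⟨h, h'⟩
      · rintro ⟨h, h'⟩; exact ⟨⟨h, (h'.trans_le hx1).le⟩, h'⟩
    rw [this]; ring

lemma static_mono {v1 v2 σ a : ℝ → ℝ} (h1 : Continuous v1) (h2 : Continuous v2)
    (n1 : ∀ x, 0 ≤ v1 x) (n2 : ∀ x, 0 ≤ v2 x) (hσ : Measurable σ) (hσ1 : ∀ x, |σ x| ≤ 1)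
    (hσ2 : ∀ x, σ x * (v1 x - v2 x) = |v1 x - v2 x|) {Φ : ℝ} (hΦ : 0 ≤ Φ)
    (hΦ1 : ∫ x in (0:ℝ)..1, v1 x = Φ) (hΦ2 : ∫ x in (0:ℝ)..1, v2 x = Φ)
    (ha : Continuous a) (na : ∀ x, 0 ≤ a x) :
    0 ≤ (∫ x in (0:ℝ)..1, σ x * ((∫ s in (0:ℝ)..(∫ y in (0:ℝ)..x, v1 y), a s) * v1 x))
      - (∫ x in (0:ℝ)..1, σ x * ((∫ s in (0:ℝ)..(∫ y in (0:ℝ)..x, v2 y), a s) * v2 x)) ∧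
    (∫ x in (0:ℝ)..1, σ x * ((∫ s in (0:ℝ)..(∫ y in (0:ℝ)..x, v1 y), a s) * v1 x))
      - (∫ x in (0:ℝ)..1, σ x * ((∫ s in (0:ℝ)..(∫ y in (0:ℝ)..x, v2 y), a s) * v2 x))
      ≤ (∫ s in (0:ℝ)..Φ, a s) * ∫ x in (0:ℝ)..1, |v1 x - v2 x| := by
  obtain ⟨i1, f1⟩ := fub h1 n1 ha hσ hσ1 hΦ hΦ1
  obtain ⟨i2, f2⟩ := fub h2 n2 ha hσ hσ1 hΦ hΦ2
  rw [← f1, ← f2, ← intervalIntegral.integral_sub i1 i2, ← intervalIntegral.integral_mul_const]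
  have L := fun s (hs : s ∈ Ioo 0 Φ) => level_bound h1 h2 n1 n2 hσ hσ1 hσ2 hΦ1 hΦ2 hs.1 hs.2
  constructor
  · rw [intervalIntegral.integral_of_le hΦ, integral_Ioc_eq_integral_Ioo]
    refine setIntegral_nonneg measurableSet_Ioo fun s hs => ?_
    rw [← mul_sub]
    exact mul_nonneg (na s) (L s hs).1
  · refine intervalIntegral.integral_mono_on_of_le_Ioo hΦ (i1.sub i2)
      ((ha.mul continuous_const).intervalIntegrable _ _) fun s hs => ?_
    rw [← mul_sub]
    exact mul_le_mul_of_nonneg_left (L s hs).2 (na s)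

lemma static_bound {K : ℝ → ℝ} (hK : ContDiff ℝ 2 K) {v1 v2 σ : ℝ → ℝ} (h1 : Continuous v1)
    (h2 : Continuous v2)
    (n1 : ∀ x, 0 ≤ v1 x) (n2 : ∀ x, 0 ≤ v2 x) (hσ : Measurable σ) (hσ1 : ∀ x, |σ x| ≤ 1)
    (hσ2 : ∀ x, σ x * (v1 x - v2 x) = |v1 x - v2 x|) {Φ : ℝ} (hΦ : 0 ≤ Φ)
    (hΦ1 : ∫ x in (0:ℝ)..1, v1 x = Φ) (hΦ2 : ∫ x in (0:ℝ)..1, v2 x = Φ) :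
    kmin K Φ * (∫ x in (0:ℝ)..1, |v1 x - v2 x|) ≤
      (∫ x in (0:ℝ)..1, σ x * (deriv K (∫ y in (0:ℝ)..x, v1 y) * v1 x
        - deriv K (∫ y in (0:ℝ)..x, v2 y) * v2 x)) ∧
    (∫ x in (0:ℝ)..1, σ x * (deriv K (∫ y in (0:ℝ)..x, v1 y) * v1 x
        - deriv K (∫ y in (0:ℝ)..x, v2 y) * v2 x)) ≤
      kmax K Φ * (∫ x in (0:ℝ)..1, |v1 x - v2 x|) := by
  have hK1 : ContDiff ℝ 1 (deriv K) := hK.deriv' (n := 1) 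
  have hK2 : Continuous (deriv (deriv K)) := hK1.continuous_deriv le_rfl
  have hd : ∀ x, HasDerivAt (deriv K) (deriv (deriv K) x) x := fun x =>
    (hK1.differentiable one_ne_zero x).hasDerivAt
  have cp : Continuous fun x => max (deriv (deriv K) x) 0 := hK2.max continuous_const
  have cm : Continuous fun x => -min (deriv (deriv K) x) 0 := (hK2.min continuous_const).neg
  have dec : ∀ y, deriv K y = deriv K 0 + (∫ s in (0:ℝ)..y, max (deriv (deriv K) s) 0)
      - ∫ s in (0:ℝ)..y, -min (deriv (deriv K) s) 0 := fun y => by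
    have := intervalIntegral.integral_eq_sub_of_hasDerivAt (a := 0) (b := y) (fun x _ => hd x)
      (hK2.intervalIntegrable _ _)
    rw [add_sub_assoc, ← intervalIntegral.integral_sub (cp.intervalIntegrable _ _)
      (cm.intervalIntegrable _ _)]
    simp only [sub_neg_eq_add, max_add_min, add_zero]
    linarith
  have P := static_mono h1 h2 n1 n2 hσ hσ1 hσ2 hΦ hΦ1 hΦ2 cp (fun x => le_max_right _ _)
  have N := static_mono h1 h2 n1 n2 hσ hσ1 hσ2 hΦ hΦ1 hΦ2 cm
    (fun x => neg_nonneg.2 (min_le_right _ _))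
  have prim : ∀ a : ℝ → ℝ, Continuous a → Continuous fun x => ∫ s in (0:ℝ)..x, a s := fun a ha =>
    intervalIntegral.continuous_primitive (fun _ _ => ha.intervalIntegrable _ _) 0
  have c1 : ∀ (a v : ℝ → ℝ), Continuous a → Continuous v →
      Continuous fun x => (∫ s in (0:ℝ)..(∫ y in (0:ℝ)..x, v y), a s) * v x := fun a v ha hv =>
    ((prim a ha).comp (prim v hv)).mul hv
  have E : (∫ x in (0:ℝ)..1, σ x * (deriv K (∫ y in (0:ℝ)..x, v1 y) * v1 x
        - deriv K (∫ y in (0:ℝ)..x, v2 y) * v2 x)) =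
      deriv K 0 * (∫ x in (0:ℝ)..1, |v1 x - v2 x|) +
      ((∫ x in (0:ℝ)..1, σ x * ((∫ s in (0:ℝ)..(∫ y in (0:ℝ)..x, v1 y), max (deriv (deriv K) s) 0) * v1 x))
      - (∫ x in (0:ℝ)..1, σ x * ((∫ s in (0:ℝ)..(∫ y in (0:ℝ)..x, v2 y), max (deriv (deriv K) s) 0) * v2 x))) -
      ((∫ x in (0:ℝ)..1, σ x * ((∫ s in (0:ℝ)..(∫ y in (0:ℝ)..x, v1 y), -min (deriv (deriv K) s) 0) * v1 x))
      - (∫ x in (0:ℝ)..1, σ x * ((∫ s in (0:ℝ)..(∫ y in (0:ℝ)..x, v2 y), -min (deriv (deriv K) s) 0) * v2 x))) := by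
    have I := fun a v ha hv => aux_intble hσ hσ1 (c1 a v ha hv) 0 1
    have I0 : IntervalIntegrable (fun x => deriv K 0 * |v1 x - v2 x|) volume 0 1 :=
      ((h1.sub h2).abs.const_mul _).intervalIntegrable _ _
    rw [← intervalIntegral.integral_const_mul, 
      ← intervalIntegral.integral_sub (I _ _ cp h1) (I _ _ cp h2),
      ← intervalIntegral.integral_sub (I _ _ cm h1) (I _ _ cm h2),
      ← intervalIntegral.integral_add I0 ((I _ _ cp h1).sub (I _ _ cp h2)),
      ← intervalIntegral.integral_sub (I0.add ((I _ _ cp h1).sub (I _ _ cp h2)))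
        ((I _ _ cm h1).sub (I _ _ cm h2))]
    refine intervalIntegral.integral_congr fun x _ => ?_
    rw [dec (∫ y in (0:ℝ)..x, v1 y), dec (∫ y in (0:ℝ)..x, v2 y), ← hσ2]
    ring
  rw [E]
  have hmin : (∫ s in (0:ℝ)..Φ, -min (deriv (deriv K) s) 0)
      = -∫ s in (0:ℝ)..Φ, min (deriv (deriv K) s) 0 := intervalIntegral.integral_neg
  rw [hmin] at N
  unfold kmin kmax
  constructor
  · linarith [P.1, N.2]
  · linarith [P.2, N.1]

lemma unif {F : ℝ → ℝ → ℝ} {τ : ℝ}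
    (hF : ContinuousOn (Function.uncurry F) (Icc 0 τ ×ˢ Icc (0:ℝ) 1)) {ε : ℝ} (hε : 0 < ε) :
    ∃ δ > 0, ∀ s ∈ Icc 0 τ, ∀ s' ∈ Icc 0 τ, ∀ x ∈ Icc (0:ℝ) 1, ∀ x' ∈ Icc (0:ℝ) 1,
      |s - s'| < δ → |x - x'| < δ → |F s x - F s' x'| < ε := by
  have := (isCompact_Icc.prod isCompact_Icc).uniformContinuousOn_of_continuous hF
  obtain ⟨δ, hδ, H⟩ := Metric.uniformContinuousOn_iff.1 this ε hε
  refine ⟨δ, hδ, fun s hs s' hs' x hx x' hx' h1 h2 => ?_⟩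
  have := H (s, x) ⟨hs, hx⟩ (s', x') ⟨hs', hx'⟩ (by
    rw [Prod.dist_eq]; exact max_lt h1 h2)
  simpa [Real.dist_eq] using this

/-- A measurable sign function. -/
def sg (x : ℝ) : ℝ := if 0 ≤ x then 1 else -1

lemma sg_meas : Measurable sg :=
  Measurable.ite measurableSet_Ici measurable_const measurable_const

lemma sg_abs (x : ℝ) : |sg x| ≤ 1 := by unfold sg; split_ifs <;> simp

lemma sg_mul (x : ℝ) : sg x * x = |x| := by
  unfold sg; split_ifs with h
  · rw [abs_of_nonneg h, one_mul]
  · rw [abs_of_neg (not_le.1 h)]; ring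

/-- `|b| - |a| ≤ sg b * (b - a)`. -/
lemma sg_up (a b : ℝ) : |b| - |a| ≤ sg b * (b - a) := by
  have := sg_mul b
  have h2 : sg b * a ≤ |a| := (le_abs_self _).trans (by
    rw [abs_mul]; nlinarith [sg_abs b, abs_nonneg a])
  nlinarith

lemma sg_le (x : ℝ) {y c : ℝ} (h : |y| ≤ c) : |sg x * y| ≤ c := by
  rw [abs_mul]
  nlinarith [sg_abs x, abs_nonneg y]

set_option maxHeartbeats 1000000 in
lemma incr {p g : ℝ → ℝ → ℝ} {τ : ℝ} (hp : Continuous (Function.uncurry p))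
    (hg : Continuous (Function.uncurry g)) (per : ∀ s ∈ Icc 0 τ, p s 0 = p s 1)
    (A : ∀ ε > 0, ∃ δ > 0, ∀ s h η, 0 ≤ s → s + h ≤ τ → 0 < h → h < δ → 0 ≤ η → η + h < 1 →
      |p (s + h) (η + h) - p s η - h * g s η| ≤ ε * h) :
    ∀ ε > 0, ∃ δ > 0, ∀ s h, 0 ≤ s → s + h ≤ τ → 0 < h → h < δ →
      ((∫ x in (0:ℝ)..1, |p (s + h) x|) - (∫ x in (0:ℝ)..1, |p s x|)
        ≤ h * ((∫ x in (0:ℝ)..1, sg (p (s + h) x) * g (s + h) x) + ε)) ∧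
      (h * ((∫ x in (0:ℝ)..1, sg (p s x) * g s x) - ε) ≤
        (∫ x in (0:ℝ)..1, |p (s + h) x|) - (∫ x in (0:ℝ)..1, |p s x|)) := by
  intro ε hε
  have he : 0 < ε / 8 := by positivity
  set e := ε / 8 with hedef
  obtain ⟨δ1, hδ1, H1⟩ := A e he
  obtain ⟨δ2, hδ2, H2⟩ := unif (τ := τ) hp.continuousOn he
  obtain ⟨δ3, hδ3, H3⟩ := unif (τ := τ) hg.continuousOn he
  obtain ⟨C, hC⟩ := (isCompact_Icc.prod isCompact_Icc).exists_bound_of_continuousOn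
    (hg.continuousOn (s := Icc 0 τ ×ˢ Icc (0:ℝ) 1))
  have hC' : ∀ s ∈ Icc 0 τ, ∀ x ∈ Icc (0:ℝ) 1, |g s x| ≤ |C| := fun s hs x hx =>
    (hC (s, x) ⟨hs, hx⟩).trans (le_abs_self C)
  refine ⟨min (min δ1 δ2) (min δ3 (min (1/2) (e / (|C| + 1)))), by positivity, ?_⟩
  intro s h hs ht hh hlt
  simp only [lt_min_iff] at hlt
  obtain ⟨⟨l1, l2⟩, l3, l4, l5⟩ := hlt
  have hCh : |C| * h ≤ e := by
    rw [lt_div_iff₀ (by positivity)] at l5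
    nlinarith
  have hsI : s ∈ Icc 0 τ := ⟨hs, by linarith⟩
  have htI : s + h ∈ Icc 0 τ := ⟨by linarith, ht⟩
  set t := s + h with htdef
  have cp : ∀ r, Continuous (p r) := fun r => hp.comp (by fun_prop : Continuous fun x : ℝ => (r, x))
  have cg : ∀ r, Continuous (g r) := fun r => hg.comp (by fun_prop : Continuous fun x : ℝ => (r, x))
  have ip : ∀ r a b, IntervalIntegrable (fun x => |p r x|) volume a b := fun r a b =>
    (cp r).abs.intervalIntegrable _ _
  have ig : ∀ r a b, IntervalIntegrable (fun x => sg (p r x) * g r x) volume a b := fun r a b =>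
    aux_intble (sg_meas.comp (cp r).measurable) (fun x => sg_abs _) (cg r) a b
  -- splitting
  have S1 := intervalIntegral.integral_add_adjacent_intervals (ip t 0 h) (ip t h 1)
  have S2 := intervalIntegral.integral_add_adjacent_intervals (ip s 0 (1-h)) (ip s (1-h) 1)
  have S3 := intervalIntegral.integral_add_adjacent_intervals (ig t 0 h) (ig t h 1)
  have S4 := intervalIntegral.integral_add_adjacent_intervals (ig s 0 (1-h)) (ig s (1-h) 1)
  -- strip
  have strip : |(∫ x in (0:ℝ)..h, |p t x|) - (∫ x in (1-h)..1, |p s x|)| ≤ 2 * e * h := by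
    have T : (∫ x in (1-h)..1, |p s x|) = ∫ x in (0:ℝ)..h, |p s (x + (1 - h))| := by
      rw [intervalIntegral.integral_comp_add_right (fun x => |p s x|)]
      simp
    have c2 : Continuous fun x => |p s (x + (1 - h))| :=
      ((cp s).comp (by fun_prop : Continuous fun x : ℝ => x + (1 - h))).abs
    rw [T, ← intervalIntegral.integral_sub (ip t 0 h) (c2.intervalIntegrable _ _),
      ← Real.norm_eq_abs]
    refine (intervalIntegral.norm_integral_le_of_norm_le_const (C := 2 * e) fun x hx => ?_).trans_eq
      (by rw [sub_zero, abs_of_pos hh])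
    rw [uIoc_of_le hh.le] at hx
    have b1 := H2 t htI t htI x ⟨hx.1.le, by linarith [hx.2]⟩ 0 (by simp) (by simpa using hδ2)
      (by rw [sub_zero, abs_of_pos hx.1]; linarith [hx.2])
    have b2 := H2 t htI s hsI 1 (by simp) (x + (1 - h)) ⟨by linarith [hx.1], by linarith [hx.2]⟩
      (by rw [htdef, add_sub_cancel_left, abs_of_pos hh]; exact l2)
      (by rw [abs_of_nonneg (by linarith [hx.2])]; linarith [hx.1])
    rw [per t htI] at b1
    rw [Real.norm_eq_abs]
    refine (abs_abs_sub_abs_le_abs_sub _ _).trans ?_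
    have : p t x - p s (x + (1 - h)) = (p t x - p t 1) + (p t 1 - p s (x + (1-h))) := by ring
    rw [this]
    refine (abs_add_le _ _).trans (by linarith)
  have strip' := abs_le.1 strip
  have bulk : (∫ x in h..1, |p t x|) = ∫ x in (0:ℝ)..(1-h), |p t (x + h)| := by
    rw [intervalIntegral.integral_comp_add_right (fun x => |p t x|)]; simp
  have c3 : Continuous fun x => p t (x + h) :=
    (cp t).comp (by fun_prop : Continuous fun x : ℝ => x + h)
  have c4 : Continuous fun x => g t (x + h) :=
    (cg t).comp (by fun_prop : Continuous fun x : ℝ => x + h)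
  have bsub : (∫ x in h..1, |p t x|) - (∫ x in (0:ℝ)..(1-h), |p s x|)
      = ∫ x in (0:ℝ)..(1-h), (|p t (x + h)| - |p s x|) := by
    rw [bulk, intervalIntegral.integral_sub (c3.abs.intervalIntegrable _ _) (ip _ _ _)]
  have ibs : IntervalIntegrable (fun x => |p t (x + h)| - |p s x|) volume 0 (1-h) :=
    (c3.abs.intervalIntegrable _ _).sub (ip _ _ _)
  constructor
  · have i5 : IntervalIntegrable (fun x => sg (p t (x+h)) * g t (x+h)) volume 0 (1-h) :=
      aux_intble (sg_meas.comp c3.measurable) (fun x => sg_abs _) c4 _ _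
    have U : (∫ x in (0:ℝ)..(1-h), (|p t (x + h)| - |p s x|))
        ≤ ∫ x in (0:ℝ)..(1-h), (h * (sg (p t (x+h)) * g t (x+h)) + 2 * e * h) := by
      refine intervalIntegral.integral_mono_on_of_le_Ioo (by linarith) ibs
        ((i5.const_mul h).add intervalIntegrable_const) fun x hx => ?_
      have a1 := abs_le.1 (H1 s h x hs ht hh l1 hx.1.le (by linarith [hx.2]))
      have a2 := abs_lt.1 (H3 t htI s hsI (x+h) ⟨by linarith [hx.1], by linarith [hx.2]⟩ x
        ⟨hx.1.le, by linarith [hx.2]⟩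
        (by rw [htdef, add_sub_cancel_left, abs_of_pos hh]; exact l3)
        (by rw [add_sub_cancel_left, abs_of_pos hh]; exact l3))
      refine (sg_up (p s x) (p t (x+h))).trans ?_
      have a3 : |p t (x+h) - p s x - h * g t (x+h)| ≤ 2 * e * h := by
        rw [abs_le]; constructor <;> nlinarith
      have a4 : sg (p t (x+h)) * (p t (x+h) - p s x - h * g t (x+h)) ≤ 2 * e * h := by
        exact (le_abs_self _).trans (sg_le _ a3)
      linarith
    rw [intervalIntegral.integral_add (i5.const_mul h) intervalIntegrable_const,
      intervalIntegral.integral_const_mul,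
      intervalIntegral.integral_comp_add_right (fun x => sg (p t x) * g t x),
      intervalIntegral.integral_const] at U
    simp only [zero_add, sub_add_cancel, sub_zero, smul_eq_mul] at U
    have R : |∫ x in (0:ℝ)..h, sg (p t x) * g t x| ≤ |C| * h := by
      rw [← Real.norm_eq_abs]
      refine (intervalIntegral.norm_integral_le_of_norm_le_const (C := |C|) fun x hx => ?_).trans_eq
        (by rw [sub_zero, abs_of_pos hh])
      rw [uIoc_of_le hh.le] at hx
      exact sg_le _ (hC' t htI x ⟨hx.1.le, by linarith [hx.2]⟩)
    have R' := abs_le.1 R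
    have h8 : ε = 8 * e := by rw [hedef]; ring
    rw [h8]
    have f1 : h * (∫ x in h..1, sg (p t x) * g t x)
        ≤ h * ((∫ x in (0:ℝ)..1, sg (p t x) * g t x) + e) :=
      mul_le_mul_of_nonneg_left (by linarith [R'.1]) hh.le
    have f2 : 0 ≤ e * h * h := by positivity
    have f3 : 0 ≤ e * h := by positivity
    linarith [strip'.2]
  · have i5 : IntervalIntegrable (fun x => sg (p s x) * g s x) volume 0 (1-h) := ig _ _ _
    have U : (∫ x in (0:ℝ)..(1-h), (h * (sg (p s x) * g s x) - 2 * e * h))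
        ≤ (∫ x in (0:ℝ)..(1-h), (|p t (x + h)| - |p s x|)) := by
      refine intervalIntegral.integral_mono_on_of_le_Ioo (by linarith) 
        ((i5.const_mul h).sub intervalIntegrable_const) ibs fun x hx => ?_
      have a1 := (H1 s h x hs ht hh l1 hx.1.le (by linarith [hx.2]))
      have a0 := sg_up (p t (x+h)) (p s x)
      have a4 : -(sg (p s x) * (p t (x+h) - p s x - h * g s x)) ≤ e * h := by
        exact (neg_le_abs _).trans (sg_le _ a1)
      have : 0 ≤ e * h := by positivity
      linarith
    rw [intervalIntegral.integral_sub (i5.const_mul h) intervalIntegrable_const,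
      intervalIntegral.integral_const_mul,
      intervalIntegral.integral_const] at U
    simp only [sub_zero, smul_eq_mul] at U
    have R : |∫ x in (1-h)..1, sg (p s x) * g s x| ≤ |C| * h := by
      rw [← Real.norm_eq_abs]
      refine (intervalIntegral.norm_integral_le_of_norm_le_const (C := |C|) fun x hx => ?_).trans_eq
        (by rw [sub_sub_cancel, abs_of_pos hh])
      rw [uIoc_of_le (by linarith)] at hx
      exact sg_le _ (hC' s hsI x ⟨by linarith [hx.1], by linarith [hx.2]⟩)
    have R' := abs_le.1 R
    have h8 : ε = 8 * e := by rw [hedef]; ring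
    rw [h8]
    have f1 : h * ((∫ x in (0:ℝ)..1, sg (p s x) * g s x) - e)
        ≤ h * (∫ x in (0:ℝ)..(1-h), sg (p s x) * g s x) :=
      mul_le_mul_of_nonneg_left (by linarith [R'.2]) hh.le
    have f2 : 0 ≤ e * h * h := by positivity
    have f3 : 0 ≤ e * h := by positivity
    linarith [strip'.1]

lemma charA {K : ℝ → ℝ} (hK : ContDiff ℝ 2 K) {Q v : ℝ → ℝ → ℝ} {c : ℝ → ℝ} {τ : ℝ}
    (hQ : ContinuousOn (Function.uncurry Q) (Icc 0 τ ×ˢ Icc (0:ℝ) 1))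
    (hv : ContinuousOn (Function.uncurry v) (Icc 0 τ ×ˢ Icc (0:ℝ) 1))
    (hd : ∀ s ∈ Icc 0 τ, ∀ x ∈ Icc (0:ℝ) 1, HasDerivWithinAt (Q s) (v s x) (Icc 0 1) x)
    (hdiag : ∀ s x h, 0 ≤ s → s + h ≤ τ → 0 ≤ x → x + h ≤ 1 → ∀ r ∈ Icc 0 h,
      HasDerivWithinAt (fun r => Q (s + r) (x + r)) (c (s + r) + K (Q (s + r) (x + r)))
        (Icc 0 h) r) :
    ∀ ε > 0, ∃ δ > 0, ∀ s h η, 0 ≤ s → s + h ≤ τ → 0 < h → h < δ → 0 ≤ η → η + h < 1 →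
      |v (s + h) (η + h) - v s η - h * (deriv K (Q s η) * v s η)| ≤ ε * h := by
  intro ε hε
  have hK1 : Continuous (deriv K) := hK.continuous_deriv (by norm_num)
  have hKd : ∀ x, HasDerivAt K (deriv K x) x := fun x =>
    (hK.differentiable (by norm_num) x).hasDerivAt
  have hm : ContinuousOn (Function.uncurry fun s x => deriv K (Q s x) * v s x)
      (Icc 0 τ ×ˢ Icc (0:ℝ) 1) := (hK1.comp_continuousOn hQ).mul hv
  obtain ⟨δ, hδ, H⟩ := unif hm hε
  refine ⟨δ / 2, by positivity, fun s h η hs ht hh hlt hη hη1 => ?_⟩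
  set g0 := deriv K (Q s η) * v s η with hg0
  -- increments
  have inc : ∀ y, η < y → y + h ≤ 1 → y < η + δ / 2 →
      |(Q (s + h) (y + h) - Q (s + h) (η + h)) - (Q s y - Q s η) - h * ((y - η) * g0)|
        ≤ ε * (y - η) * h := by
    intro y hy hyh hyδ
    have inner : ∀ r ∈ Icc 0 h,
        |K (Q (s + r) (y + r)) - K (Q (s + r) (η + r)) - (y - η) * g0| ≤ ε * (y - η) := by
      intro r hr
      have hsr : s + r ∈ Icc 0 τ := ⟨by linarith [hr.1], by linarith [hr.2]⟩
      have sub : Icc (η + r) (y + r) ⊆ Icc 0 1 := Icc_subset_Icc (by linarith [hr.1])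
        (by linarith [hr.2])
      have := norm_image_sub_le_of_norm_deriv_le_segment' (a := η + r) (b := y + r)
        (f := fun z => K (Q (s + r) z) - z * g0)
        (f' := fun z => deriv K (Q (s + r) z) * v (s + r) z - 1 * g0) (C := ε) ?_ ?_ (y + r)
        ⟨by linarith, le_rfl⟩
      · rw [Real.norm_eq_abs] at this
        convert this using 2 <;> ring
      · intro z hz
        exact (((hKd _).comp_hasDerivWithinAt z (hd _ hsr z (sub hz))).mono sub).sub
          ((hasDerivWithinAt_id z _).mul_const g0)
      · intro z hz
        rw [one_mul, Real.norm_eq_abs]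
        refine (H _ hsr s ⟨hs, by linarith⟩ z (sub ⟨hz.1, hz.2.le⟩) η ⟨hη, by linarith⟩ ?_ ?_).le
        · rw [add_sub_cancel_left, abs_of_nonneg hr.1]; linarith [hr.2]
        · rw [abs_of_nonneg (by linarith [hz.1, hr.1])]; linarith [hz.2, hr.2]
    have := norm_image_sub_le_of_norm_deriv_le_segment' (a := 0) (b := h)
        (f := fun r => Q (s + r) (y + r) - Q (s + r) (η + r) - r * ((y - η) * g0))
        (f' := fun r => (c (s + r) + K (Q (s + r) (y + r))) - (c (s + r) + K (Q (s + r) (η + r)))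
          - 1 * ((y - η) * g0)) (C := ε * (y - η)) ?_ ?_ h ⟨hh.le, le_rfl⟩
    · rw [Real.norm_eq_abs] at this
      convert this using 2 
      · simp only [add_zero, zero_mul]; ring
      · ring
    · intro r hr
      exact ((hdiag s y h hs ht (by linarith) hyh r hr).sub
        (hdiag s η h hs ht hη hη1.le r hr)).sub ((hasDerivWithinAt_id r _).mul_const _)
    · intro r hr
      rw [Real.norm_eq_abs]
      convert inner r ⟨hr.1, hr.2.le⟩ using 2
      ring
  have hb : η < 1 - h := by linarith
  have D : HasDerivWithinAt (fun y => Q (s + h) (y + h) - Q s y - y * (h * g0))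
      (v (s + h) (η + h) * 1 - v s η - 1 * (h * g0)) (Ioc η (1 - h)) η := by
    refine HasDerivWithinAt.sub (HasDerivWithinAt.sub ?_ ?_) ((hasDerivWithinAt_id η _).mul_const _)
    · refine HasDerivWithinAt.comp (h₂ := Q (s + h)) (h := fun y => y + h) η
        (hd (s + h) ⟨by linarith, ht⟩ (η + h) ⟨by linarith, hη1.le⟩)
        ((hasDerivWithinAt_id η _).add_const h) ?_
      intro y hy
      exact ⟨by linarith [hy.1], by linarith [hy.2]⟩
    · refine (hd s ⟨hs, by linarith⟩ η ⟨hη, by linarith⟩).mono ?_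
      intro y hy
      exact ⟨by linarith [hy.1], by linarith [hy.2]⟩
  rw [hasDerivWithinAt_iff_tendsto_slope' (by simp), nhdsWithin_Ioc_eq_nhdsGT hb] at D
  have := le_of_tendsto D.abs (b := ε * h) ?_
  · simpa only [mul_one, one_mul] using this
  · filter_upwards [Ioo_mem_nhdsGT (show η < min (1 - h) (η + δ/2) by
      rw [lt_min_iff]; constructor <;> linarith)] with y hy
    have hy2 := lt_min_iff.1 hy.2
    have := inc y hy.1 (by linarith [hy2.1]) hy2.2
    have hpos : 0 < y - η := sub_pos.2 hy.1
    rw [slope_def_field, abs_div, abs_of_pos hpos, div_le_iff₀ hpos]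
    refine le_trans (le_of_eq ?_) (this.trans_eq (by ring))
    congr 1; ring

lemma pack {K : ℝ → ℝ} {ΦF : ℝ} (hK : KAssump K ΦF) {T : ℝ≥0∞} {Qinit : ℝ → ℝ}
    {Q : ℝ → ℝ → ℝ} {N : ℝ → ℝ} (h : IsQSol K ΦF T Qinit Q N) {τ : ℝ} (hτ : 0 < τ)
    (hτT : ENNReal.ofReal τ < T) :
    ContinuousOn (Function.uncurry Q) (Icc 0 τ ×ˢ Icc (0:ℝ) 1) ∧
    ContinuousOn (Function.uncurry (pdEta Q)) (Icc 0 τ ×ˢ Icc (0:ℝ) 1) ∧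
    (∀ s ∈ Icc 0 τ, ∀ x ∈ Icc (0:ℝ) 1, HasDerivWithinAt (Q s) (pdEta Q s x) (Icc 0 1) x) ∧
    (∀ s x h, 0 ≤ s → s + h ≤ τ → 0 ≤ x → x + h ≤ 1 → ∀ r ∈ Icc 0 h,
      HasDerivWithinAt (fun r => Q (s + r) (x + r))
        ((pdEta Q (s + r) 1 - K ΦF) + K (Q (s + r) (x + r))) (Icc 0 h) r) ∧
    (∀ s ∈ Icc 0 τ, Q s 1 = ΦF) ∧
    (∀ s ∈ Icc 0 τ, pdEta Q s 1 - pdEta Q s 0 = K ΦF - K 0) ∧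
    (∀ s ∈ Icc 0 τ, ∀ x, 0 ≤ pdEta Q s x) ∧ (∀ s ∈ Icc 0 τ, Q s 0 = 0) := by
  set R := Icc 0 τ ×ˢ Icc (0:ℝ) 1 with hR
  have sub0 : ∀ s ∈ Icc 0 τ, s ∈ Ico0 T := fun s hs =>
    ⟨hs.1, (ENNReal.ofReal_le_ofReal hs.2).trans_lt hτT⟩
  have reg : ContDiffOn ℝ 1 (Function.uncurry Q) R :=
    h.reg.mono (prod_mono (fun s hs => sub0 s hs) le_rfl)
  have U : UniqueDiffOn ℝ R := (uniqueDiffOn_Icc hτ).prod (uniqueDiffOn_Icc one_pos)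
  set L : ℝ × ℝ → (ℝ × ℝ →L[ℝ] ℝ) := fderivWithin ℝ (Function.uncurry Q) R with hL
  have hLd : ∀ z ∈ R, HasFDerivWithinAt (Function.uncurry Q) (L z) R z := fun z hz =>
    (reg.differentiableOn one_ne_zero z hz).hasFDerivWithinAt
  have Lc : ContinuousOn L R := reg.continuousOn_fderivWithin U le_rfl
  have d2 : ∀ s ∈ Icc 0 τ, ∀ x ∈ Icc (0:ℝ) 1,
      HasDerivWithinAt (Q s) (L (s, x) (0, 1)) (Icc 0 1) x := by
    intro s hs x hx
    have := (hLd (s, x) ⟨hs, hx⟩).comp_hasDerivWithinAt (f := fun y => (s, y)) x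
      (((hasDerivWithinAt_const x (Icc (0:ℝ) 1) s).prodMk (hasDerivWithinAt_id x _)))
      (fun y hy => ⟨hs, hy⟩)
    exact this
  have d1 : ∀ s ∈ Icc 0 τ, ∀ x ∈ Icc (0:ℝ) 1,
      HasDerivWithinAt (fun r => Q r x) (L (s, x) (1, 0)) (Icc 0 τ) s := by
    intro s hs x hx
    have := (hLd (s, x) ⟨hs, hx⟩).comp_hasDerivWithinAt (f := fun y => (y, x)) s
      (((hasDerivWithinAt_id s (Icc 0 τ)).prodMk (hasDerivWithinAt_const s _ x)))
      (fun y hy => ⟨hy, hx⟩)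
    exact this
  have veq : ∀ s ∈ Icc 0 τ, ∀ x ∈ Icc (0:ℝ) 1, pdEta Q s x = L (s, x) (0, 1) := fun s hs x hx =>
    (d2 s hs x hx).derivWithin (uniqueDiffOn_Icc one_pos x hx)
  have hv : ContinuousOn (Function.uncurry (pdEta Q)) R := by
    refine (Lc.clm_apply continuousOn_const (g := fun _ => ((0:ℝ), (1:ℝ)))).congr ?_
    rintro ⟨s, x⟩ ⟨hs, hx⟩
    exact veq s hs x hx
  have hv1 : ContinuousOn (fun z : ℝ × ℝ => pdEta Q z.1 1) R := by
    refine hv.comp (f := fun z : ℝ × ℝ => (z.1, (1:ℝ))) (by fun_prop) ?_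
    rintro ⟨s, x⟩ ⟨hs, hx⟩
    exact ⟨hs, by simp⟩
  have key : EqOn (fun z => L z (1, 0) + L z (0, 1))
      (fun z => pdEta Q z.1 1 - K ΦF + K (Function.uncurry Q z)) R := by
    refine Set.EqOn.of_subset_closure (s := Ioo 0 τ ×ˢ Ioo (0:ℝ) 1) ?_ ?_ ?_ ?_ ?_
    · rintro ⟨s, x⟩ ⟨hs, hx⟩
      have hs' := Ioo_subset_Icc_self hs
      have hx' := Ioo_subset_Icc_self hx
      have e1 : pdTau Q s x = L (s, x) (1, 0) := by
        have : HasDerivAt (fun r => Q r x) (L (s, x) (1, 0)) s :=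
          (d1 s hs' x hx').hasDerivAt (Icc_mem_nhds hs.1 hs.2)
        exact this.hasDerivWithinAt.derivWithin (uniqueDiffOn_Ici 0 s hs.1.le)
      have := h.pde s (sub0 s hs') x hx
      rw [h.Ndef s (sub0 s hs'), e1, veq s hs' x hx'] at this
      exact this
    · exact (Lc.clm_apply continuousOn_const).add (Lc.clm_apply continuousOn_const)
    · exact (hv1.sub continuousOn_const).add (hK.smooth.continuous.comp_continuousOn reg.continuousOn)
    · exact prod_mono Ioo_subset_Icc_self Ioo_subset_Icc_self
    · rw [closure_prod_eq, closure_Ioo hτ.ne, closure_Ioo (zero_ne_one)]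
  have Q1 : ∀ s ∈ Icc 0 τ, Q s 1 = ΦF := by
    obtain ⟨C, hC⟩ := hK.bdd1
    have lip : ∀ x y, ‖K x - K y‖ ≤ C * ‖x - y‖ := fun x y =>
      Convex.norm_image_sub_le_of_norm_deriv_le (s := univ)
        (fun z _ => hK.smooth.differentiable (by norm_num) z) (fun z _ => hC z) convex_univ
        (mem_univ _) (mem_univ _)
    have h1I : (1:ℝ) ∈ Icc (0:ℝ) 1 := by simp
    have := eq_zero_of_abs_deriv_le_mul_abs_self_of_eq_zero_right
      (f := fun s => Q s 1 - ΦF) (f' := fun s => L (s, 1) (1, 0)) (K := C) (a := 0) (b := τ)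
      ?_ ?_ ?_ ?_
    · intro s hs
      linarith [this s hs]
    · exact fun s hs => (((d1 s hs 1 h1I).sub_const ΦF)).continuousWithinAt
    · intro s hs
      exact ((d1 s (Ico_subset_Icc_self hs) 1 h1I).sub_const ΦF).mono_of_mem_nhdsWithin
        (Icc_mem_nhdsGE_of_mem hs)
    · change Q 0 1 - ΦF = 0
      rw [h.init 1 h1I, h.init1, sub_self]
    · intro s hs
      have hs' := Ico_subset_Icc_self hs
      have := key (x := (s, 1)) ⟨hs', h1I⟩
      simp only [Function.uncurry] at this
      rw [← veq s hs' 1 h1I] at this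
      have e : L (s, 1) (1, 0) = K (Q s 1) - K ΦF := by linarith
      simp only [e]
      exact lip _ _
  refine ⟨reg.continuousOn, hv, ?_, ?_, Q1, ?_, ?_, fun s hs => h.bc s (sub0 s hs)⟩
  · intro s hs x hx
    rw [veq s hs x hx]; exact d2 s hs x hx
  · intro s x l hs ht hx hl r hr
    have hz : (s + r, x + r) ∈ R := ⟨⟨by linarith [hr.1], by linarith [hr.2]⟩,
      ⟨by linarith [hr.1], by linarith [hr.2]⟩⟩
    have := (hLd _ hz).comp_hasDerivWithinAt (f := fun y => (s + y, x + y)) (s := Icc 0 l) r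
      (((hasDerivWithinAt_id r (Icc 0 l)).const_add s).prodMk
        ((hasDerivWithinAt_id r (Icc 0 l)).const_add x))
      (fun y hy => ⟨⟨by linarith [hy.1], by linarith [hy.2]⟩,
      ⟨by linarith [hy.1], by linarith [hy.2]⟩⟩)
    have k := key hz
    simp only [Function.uncurry] at k
    rw [← k, ← map_add]
    have e : ((1:ℝ), (0:ℝ)) + (0, 1) = (1, 1) := by simp
    rw [e]
    exact this
  · intro s hs
    have h0I : (0:ℝ) ∈ Icc (0:ℝ) 1 := by simp
    have k := key (x := (s, 0)) ⟨hs, h0I⟩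
    simp only [Function.uncurry] at k
    rw [← veq s hs 0 h0I, h.bc s (sub0 s hs)] at k
    have z : L (s, 0) (1, 0) = 0 := by
      refine (uniqueDiffOn_Icc hτ s hs).eq_deriv (Icc 0 τ) (d1 s hs 0 h0I) ?_
      refine (hasDerivWithinAt_const s (Icc 0 τ) (0:ℝ)).congr (fun r hr => h.bc r (sub0 r hr))
        (h.bc s (sub0 s hs))
    linarith
  · intro s hs x
    exact (h.mono s (sub0 s hs)).derivWithin_nonneg

/-- Continuous extension of a function on the rectangle. -/
def rectExt (τ : ℝ) (hτ : 0 ≤ τ) (F : ℝ → ℝ → ℝ) (s x : ℝ) : ℝ :=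
  F (projIcc 0 τ hτ s) (projIcc (0:ℝ) 1 zero_le_one x)

lemma rectExt_cont {τ : ℝ} (hτ : 0 ≤ τ) {F : ℝ → ℝ → ℝ}
    (hF : ContinuousOn (Function.uncurry F) (Icc 0 τ ×ˢ Icc (0:ℝ) 1)) :
    Continuous (Function.uncurry (rectExt τ hτ F)) := by
  refine hF.comp_continuous (f := fun z : ℝ × ℝ => (((projIcc 0 τ hτ z.1 : Icc 0 τ) : ℝ),
    ((projIcc (0:ℝ) 1 zero_le_one z.2 : Icc (0:ℝ) 1) : ℝ))) ?_ ?_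
  · exact ((continuous_subtype_val.comp continuous_projIcc).comp continuous_fst).prodMk
      ((continuous_subtype_val.comp continuous_projIcc).comp continuous_snd)
  · intro z
    exact ⟨Subtype.coe_prop _, Subtype.coe_prop _⟩

lemma rectExt_eq {τ : ℝ} (hτ : 0 ≤ τ) (F : ℝ → ℝ → ℝ) {s x : ℝ} (hs : s ∈ Icc 0 τ)
    (hx : x ∈ Icc (0:ℝ) 1) : rectExt τ hτ F s x = F s x := by
  simp only [rectExt, projIcc_of_mem hτ hs, projIcc_of_mem zero_le_one hx]

lemma rectExt_prim {τ : ℝ} (hτ : 0 ≤ τ) {Q v : ℝ → ℝ → ℝ}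
    (hv : ContinuousOn (Function.uncurry v) (Icc 0 τ ×ˢ Icc (0:ℝ) 1))
    (hd : ∀ s ∈ Icc 0 τ, ∀ x ∈ Icc (0:ℝ) 1, HasDerivWithinAt (Q s) (v s x) (Icc 0 1) x)
    (h0 : ∀ s ∈ Icc 0 τ, Q s 0 = 0) {s x : ℝ} (hs : s ∈ Icc 0 τ) (hx : x ∈ Icc (0:ℝ) 1) :
    (∫ y in (0:ℝ)..x, rectExt τ hτ v s y) = Q s x := by
  have c : Continuous (rectExt τ hτ v s) :=
    (rectExt_cont hτ hv).comp (by fun_prop : Continuous fun x : ℝ => (s, x))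
  rw [intervalIntegral.integral_eq_sub_of_hasDerivAt_of_le hx.1 (f := Q s), h0 s hs, sub_zero]
  · exact fun y hy => (hd s hs y ⟨hy.1, hy.2.trans hx.2⟩).continuousWithinAt.mono
      (Icc_subset_Icc_right hx.2)
  · intro y hy
    have hy' : y ∈ Icc (0:ℝ) 1 := ⟨hy.1.le, hy.2.le.trans hx.2⟩
    rw [rectExt_eq hτ v hs hy']
    exact (hd s hs y hy').hasDerivAt (Icc_mem_nhds hy.1 (hy.2.trans_le hx.2))
  · exact c.intervalIntegrable _ _

lemma main_pos {ΦF : ℝ} (hΦF : 0 < ΦF) {K : ℝ → ℝ} (hK : KAssump K ΦF)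
    {T₁ T₂ : ℝ≥0∞} {Qinit₁ Qinit₂ : ℝ → ℝ} {Q₁ Q₂ : ℝ → ℝ → ℝ} {N₁ N₂ : ℝ → ℝ}
    (h1 : IsQSol K ΦF T₁ Qinit₁ Q₁ N₁) (h2 : IsQSol K ΦF T₂ Qinit₂ Q₂ N₂)
    {τ : ℝ} (hτ0 : 0 < τ) (hτ1 : ENNReal.ofReal τ < T₁) (hτ2 : ENNReal.ofReal τ < T₂) :
    Real.exp (kmin K ΦF * τ) * (∫ η in (0 : ℝ)..1, |pdEta Q₁ 0 η - pdEta Q₂ 0 η|)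
      ≤ (∫ η in (0 : ℝ)..1, |pdEta Q₁ τ η - pdEta Q₂ τ η|) ∧
    (∫ η in (0 : ℝ)..1, |pdEta Q₁ τ η - pdEta Q₂ τ η|)
      ≤ Real.exp (kmax K ΦF * τ) * ∫ η in (0 : ℝ)..1, |pdEta Q₁ 0 η - pdEta Q₂ 0 η| := by
  obtain ⟨cQ1, cv1, hd1, dg1, e1, per1, n1, z1⟩ := pack hK h1 hτ0 hτ1
  obtain ⟨cQ2, cv2, hd2, dg2, e2, per2, n2, z2⟩ := pack hK h2 hτ0 hτ2
  have A1 := charA hK.smooth cQ1 cv1 hd1 (c := fun s => pdEta Q₁ s 1 - K ΦF) dg1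
  have A2 := charA hK.smooth cQ2 cv2 hd2 (c := fun s => pdEta Q₂ s 1 - K ΦF) dg2
  have hK1 : Continuous (deriv K) := hK.smooth.continuous_deriv (by norm_num)
  set m1 : ℝ → ℝ → ℝ := fun s x => deriv K (Q₁ s x) * pdEta Q₁ s x with hm1
  set m2 : ℝ → ℝ → ℝ := fun s x => deriv K (Q₂ s x) * pdEta Q₂ s x with hm2
  have cm1 : ContinuousOn (Function.uncurry m1) (Icc 0 τ ×ˢ Icc (0:ℝ) 1) :=
    (hK1.comp_continuousOn cQ1).mul cv1
  have cm2 : ContinuousOn (Function.uncurry m2) (Icc 0 τ ×ˢ Icc (0:ℝ) 1) :=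
    (hK1.comp_continuousOn cQ2).mul cv2
  have hτ := hτ0.le
  set V1 := rectExt τ hτ (pdEta Q₁) with hV1
  set V2 := rectExt τ hτ (pdEta Q₂) with hV2
  set p : ℝ → ℝ → ℝ := fun s x => V1 s x - V2 s x with hp
  set g : ℝ → ℝ → ℝ := fun s x => rectExt τ hτ m1 s x - rectExt τ hτ m2 s x with hg
  have cp : Continuous (Function.uncurry p) := (rectExt_cont hτ cv1).sub (rectExt_cont hτ cv2)
  have cg : Continuous (Function.uncurry g) := (rectExt_cont hτ cm1).sub (rectExt_cont hτ cm2)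
  have I0 : (0:ℝ) ∈ Icc (0:ℝ) 1 := by simp
  have I1 : (1:ℝ) ∈ Icc (0:ℝ) 1 := by simp
  have per : ∀ s ∈ Icc 0 τ, p s 0 = p s 1 := fun s hs => by
    simp only [hp, hV1, hV2, rectExt_eq hτ _ hs I0, rectExt_eq hτ _ hs I1]
    linarith [per1 s hs, per2 s hs]
  have INC := incr cp cg per (fun ε hε => by
    obtain ⟨δ1, hδ1, H1⟩ := A1 (ε / 2) (by positivity)
    obtain ⟨δ2, hδ2, H2⟩ := A2 (ε / 2) (by positivity)
    refine ⟨min δ1 δ2, lt_min hδ1 hδ2, fun s h η hs ht hh hlt hη hη1 => ?_⟩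
    have hsI : s ∈ Icc 0 τ := ⟨hs, by linarith⟩
    have htI : s + h ∈ Icc 0 τ := ⟨by linarith, ht⟩
    have hx : η ∈ Icc (0:ℝ) 1 := ⟨hη, by linarith⟩
    have hx' : η + h ∈ Icc (0:ℝ) 1 := ⟨by linarith, hη1.le⟩
    simp only [hp, hV1, hV2, hg, rectExt_eq hτ _ hsI hx, rectExt_eq hτ _ htI hx']
    have b1 := abs_le.1 (H1 s h η hs ht hh (hlt.trans_le (min_le_left _ _)) hη hη1)
    have b2 := abs_le.1 (H2 s h η hs ht hh (hlt.trans_le (min_le_right _ _)) hη hη1)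
    simp only [hm1, hm2]
    rw [abs_le]; constructor <;> linarith [b1.1, b1.2, b2.1, b2.2])
  set J : ℝ → ℝ := fun s => ∫ x in (0:ℝ)..1, |p s x| with hJ
  have cJ : Continuous J :=
    intervalIntegral.continuous_parametric_intervalIntegral_of_continuous' cp.abs 0 1
  have ST : ∀ s ∈ Icc 0 τ, kmin K ΦF * J s ≤ (∫ x in (0:ℝ)..1, sg (p s x) * g s x) ∧
      (∫ x in (0:ℝ)..1, sg (p s x) * g s x) ≤ kmax K ΦF * J s := by
    intro s hs
    have c1 : Continuous (V1 s) :=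
      (rectExt_cont hτ cv1).comp (by fun_prop : Continuous fun x : ℝ => (s, x))
    have c2 : Continuous (V2 s) :=
      (rectExt_cont hτ cv2).comp (by fun_prop : Continuous fun x : ℝ => (s, x))
    have := static_bound hK.smooth c1 c2 (fun x => n1 _ (Subtype.coe_prop _) _)
      (fun x => n2 _ (Subtype.coe_prop _) _)
      (σ := fun x => sg (p s x)) (sg_meas.comp (c1.sub c2).measurable) (fun x => sg_abs _)
      (fun x => sg_mul _) hΦF.le
      ((rectExt_prim hτ cv1 hd1 z1 hs I1).trans (e1 s hs))
      ((rectExt_prim hτ cv2 hd2 z2 hs I1).trans (e2 s hs))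
    have E : (∫ x in (0:ℝ)..1, sg (p s x) * g s x) = ∫ x in (0:ℝ)..1, sg (p s x) *
        (deriv K (∫ y in (0:ℝ)..x, V1 s y) * V1 s x
        - deriv K (∫ y in (0:ℝ)..x, V2 s y) * V2 s x) := by
      refine intervalIntegral.integral_congr fun x hx => ?_
      rw [uIcc_of_le zero_le_one] at hx
      simp only [hg, hV1, hV2]
      rw [rectExt_prim hτ cv1 hd1 z1 hs hx, rectExt_prim hτ cv2 hd2 z2 hs hx, rectExt_eq hτ _ hs hx,
        rectExt_eq hτ _ hs hx, rectExt_eq hτ _ hs hx, rectExt_eq hτ _ hs hx]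
    rw [E]
    exact this
  have JE : ∀ s ∈ Icc 0 τ, (∫ η in (0 : ℝ)..1, |pdEta Q₁ s η - pdEta Q₂ s η|) = J s := by
    intro s hs
    refine intervalIntegral.integral_congr fun x hx => ?_
    rw [uIcc_of_le zero_le_one] at hx
    simp only [hp, hV1, hV2, rectExt_eq hτ _ hs hx]
  rw [JE 0 ⟨le_rfl, hτ⟩, JE τ ⟨hτ, le_rfl⟩]
  have near : ∀ x ∈ Ico 0 τ, ∀ δ > 0, ∀ᶠ z in 𝓝[>] x, 0 < z - x ∧ z - x < δ ∧ z ≤ τ := by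
    intro x hx δ hδ
    filter_upwards [Ioo_mem_nhdsGT (show x < min τ (x + δ) from
      lt_min hx.2 (by linarith))] with z hz
    have := lt_min_iff.1 hz.2
    exact ⟨sub_pos.2 hz.1, by linarith [this.2], this.1.le⟩
  constructor
  · have G := le_gronwallBound_of_liminf_deriv_right_le (f := fun s => -J s)
      (f' := fun s => kmin K ΦF * (-J s)) (δ := -J 0) (K := kmin K ΦF) (ε := 0) (a := 0) (b := τ)
      cJ.neg.continuousOn ?_ le_rfl (fun x _ => by simp) τ ⟨hτ, le_rfl⟩
    · rw [gronwallBound_ε0, sub_zero] at G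
      linarith
    · intro x hx r hr
      obtain ⟨δ, hδ, H⟩ := INC ((r - kmin K ΦF * (-J x)) / 2) (by linarith)
      refine Eventually.frequently ?_
      filter_upwards [near x hx δ hδ] with z hz
      obtain ⟨h0, hlt, hzτ⟩ := hz
      have := (H x (z - x) hx.1 (by linarith) h0 hlt).2
      rw [add_sub_cancel] at this
      have s1 := (ST x ⟨hx.1, hx.2.le⟩).1
      rw [inv_mul_lt_iff₀ h0]
      change (z - x) * _ ≤ J z - J x at this
      nlinarith
  · have G := le_gronwallBound_of_liminf_deriv_right_le (f := J)
      (f' := fun s => kmax K ΦF * J s) (δ := J 0) (K := kmax K ΦF) (ε := 0) (a := 0) (b := τ)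
      cJ.continuousOn ?_ le_rfl (fun x _ => by simp) τ ⟨hτ, le_rfl⟩
    · rw [gronwallBound_ε0, sub_zero] at G
      linarith
    · intro x hx r hr
      obtain ⟨δ, hδ, H⟩ := INC ((r - kmax K ΦF * J x) / 2) (by linarith)
      refine Eventually.frequently ?_
      have cc : ∀ᶠ z in 𝓝[>] x, kmax K ΦF * J z < kmax K ΦF * J x + (r - kmax K ΦF * J x) / 2 :=
        ((cJ.const_mul (kmax K ΦF)).continuousAt.eventually_lt continuousAt_const
          (by linarith)).filter_mono nhdsWithin_le_nhds
      filter_upwards [near x hx δ hδ, cc] with z hz hcz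
      obtain ⟨h0, hlt, hzτ⟩ := hz
      have := (H x (z - x) hx.1 (by linarith) h0 hlt).1
      rw [add_sub_cancel] at this
      have s1 := (ST z ⟨by linarith [hx.1], hzτ⟩).2
      rw [inv_mul_lt_iff₀ h0]
      change J z - J x ≤ (z - x) * _ at this
      nlinarith

/-- Theorem 4.1 (key stability / BV estimate): contraction-expansion bounds in the
`L¹`-distance between spatial derivatives of two classical solutions. -/
theorem stmt7 (ΦF : ℝ) (hΦF : 0 < ΦF) (K : ℝ → ℝ) (hK : KAssump K ΦF)
    (T₁ T₂ : ℝ≥0∞) (Qinit₁ Qinit₂ : ℝ → ℝ) (Q₁ Q₂ : ℝ → ℝ → ℝ) (N₁ N₂ : ℝ → ℝ)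
    (h1 : IsQSol K ΦF T₁ Qinit₁ Q₁ N₁) (h2 : IsQSol K ΦF T₂ Qinit₂ Q₂ N₂)
    (τ : ℝ) (hτ0 : 0 ≤ τ) (hτ1 : ENNReal.ofReal τ < T₁) (hτ2 : ENNReal.ofReal τ < T₂) :
    Real.exp (kmin K ΦF * τ) * (∫ η in (0 : ℝ)..1, |pdEta Q₁ 0 η - pdEta Q₂ 0 η|)
      ≤ (∫ η in (0 : ℝ)..1, |pdEta Q₁ τ η - pdEta Q₂ τ η|) ∧
    (∫ η in (0 : ℝ)..1, |pdEta Q₁ τ η - pdEta Q₂ τ η|)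
      ≤ Real.exp (kmax K ΦF * τ) * ∫ η in (0 : ℝ)..1, |pdEta Q₁ 0 η - pdEta Q₂ 0 η| := by

  rcases hτ0.eq_or_lt with h | h
  · subst h
    simp
  · exact main_pos hΦF hK h1 h2 h hτ1 hτ2
end
end
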